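/- Assume additionally that 0 belongs to the spectrum of A, in the sense that there is a sequence (wₙ) in D(A) with ‖wₙ‖ = 1 and ‖Awₙ‖ → 0. Then there exists c₀ > 0 such that for every T > 0 there exist t > T, a strong solution u of the abstract damped wave equation with data u(0) = u₀ ∈ D(A), u'(0) = u₁ satisfying ‖u₀‖² + re⟪Au₀,u₀⟫ + ‖u₁‖² ≤ 1, and a solution v of the associated abstract heat equation with v(0) = B^{1/2}u₀ + B^{-1/2}u₁, such that t·‖u(t) − B^{-1/2}v(t)‖ ≥ c₀. (That is, the uniform decay rate t⁻¹ in the diffusion approximation is optimal.) -/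

import Mathlib

open scoped ComplexInnerProductSpace

/-- A strong solution of the abstract damped wave equation `u'' + Au + Bu' = 0` on `[0,∞)`. -/
structure DampedWaveSolution
    {H : Type*} [NormedAddCommGroup H] [InnerProductSpace ℂ H] [CompleteSpace H]
    (A : H →ₗ.[ℂ] H) (B : H →L[ℂ] H) where
  u : ℝ → H
  du : ℝ → H
  ddu : ℝ → H
  Au : ℝ → H
  mem : ∀ t : ℝ, 0 ≤ t → u t ∈ A.domain
  hAu : ∀ (t : ℝ) (ht : 0 ≤ t), A ⟨u t, mem t ht⟩ = Au t
  hdu : ∀ t : ℝ, 0 ≤ t → HasDerivWithinAt u (du t) (Set.Ici 0) t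
  hddu : ∀ t : ℝ, 0 ≤ t → HasDerivWithinAt du (ddu t) (Set.Ici 0) t
  cont_ddu : ContinuousOn ddu (Set.Ici 0)
  cont_Au : ContinuousOn Au (Set.Ici 0)
  eqn : ∀ t : ℝ, 0 ≤ t → ddu t + Au t + B (du t) = 0

/-- A solution of the associated abstract heat equation
`v' + B^{-1/2} A B^{-1/2} v = 0` on `[0,∞)`, where `Binvh` stands for `B^{-1/2}`. -/
structure HeatSolution
    {H : Type*} [NormedAddCommGroup H] [InnerProductSpace ℂ H] [CompleteSpace H]
    (A : H →ₗ.[ℂ] H) (Binvh : H →L[ℂ] H) where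
  v : ℝ → H
  dv : ℝ → H
  mem : ∀ t : ℝ, 0 ≤ t → Binvh (v t) ∈ A.domain
  hdv : ∀ t : ℝ, 0 ≤ t → HasDerivWithinAt v (dv t) (Set.Ici 0) t
  cont_dv : ContinuousOn dv (Set.Ici 0)
  eqn : ∀ (t : ℝ) (ht : 0 ≤ t), dv t + Binvh (A ⟨Binvh (v t), mem t ht⟩) = 0

/-!
The operator `𝒜 = B^{-1/2} A B^{-1/2}` is nonnegative and self-adjoint, and `0` lies in its spectrum
without being an eigenvalue, so `𝒜` has arbitrarily small spectral values `l > 0`. For `x` in a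
spectral subspace close to such an `l`, the heat solution starting at `x` is `≈ e^{-lt} x`. Take
`u₀ = χ := B^{-1/2} x` and `u₁ = 0`, so that `v(0) = x`. Testing the two equations against `χ`, the
difference `d = u - B^{-1/2} v` satisfies `⟪χ, u''⟫ + ⟪Bχ, d'⟫ = -⟪Aχ, d⟫`, where `‖Aχ‖ = O(l)`.
Hence the second difference of `⟪χ, B^{-1/2} v⟫` at `1/l` with step `1/(2l)` is
`O(l⁻¹ sup ‖d‖ ‖χ‖)`, the supremum being over `[1/l, 2/l]`. But `v ≈ e^{-lt} x` makes it a fixed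
multiple of `‖χ‖²`, so `t ‖d(t)‖` is bounded below at some `t` of size `1/l`.

The wave solution comes from the Hille–Yosida theorem applied to the first-order system for
`(A^{1/2} u, u')`. The operators involved are only partially defined and are handled through their
graphs and bounded resolvents.
-/

section LinearRelations

variable {𝕜 E : Type*} [RCLike 𝕜]

section Normed

variable [NormedAddCommGroup E] [NormedSpace 𝕜 E]

/-- `J` is a contractive resolvent `(1 + aS)⁻¹` of the linear relation `S`. Partially defined
operators are represented by their graphs, so that `p ∈ S` stands for `p.2 = S p.1`. -/
structure IsContractiveResolvent (S : Submodule 𝕜 (E × E)) (a : 𝕜) (J : E →L[𝕜] E) : Prop where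
  norm_apply_le : ∀ f, ‖J f‖ ≤ ‖f‖
  mem_iff : ∀ p : E × E, p ∈ S ↔ J (p.1 + a • p.2) = p.1

theorem exists_isContractiveResolvent {S : Submodule 𝕜 (E × E)} {a : 𝕜} (ha : a ≠ 0)
    (norm_fst_le : ∀ p ∈ S, ‖p.1‖ ≤ ‖p.1 + a • p.2‖)
    (surj : ∀ f, ∃ p ∈ S, p.1 + a • p.2 = f) :
    ∃ J : E →L[𝕜] E, IsContractiveResolvent S a J := by
  let Φ : S →ₗ[𝕜] E := (LinearMap.fst 𝕜 E E + a • LinearMap.snd 𝕜 E E) ∘ₗ S.subtype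
  have Φ_injective : Function.Injective Φ := by
    refine (injective_iff_map_eq_zero Φ).2 fun ⟨p, hp⟩ hΦ => ?_
    have hsum : p.1 + a • p.2 = 0 := hΦ
    have hfst : p.1 = 0 := by simpa [hsum] using norm_fst_le p hp
    have hsnd : p.2 = 0 := by simpa [hfst, ha] using hsum
    exact Subtype.ext (Prod.ext hfst hsnd)
  have Φ_surjective : Function.Surjective Φ := fun f => by
    obtain ⟨p, hp, rfl⟩ := surj f
    exact ⟨⟨p, hp⟩, rfl⟩
  let e : S ≃ₗ[𝕜] E := LinearEquiv.ofBijective Φ ⟨Φ_injective, Φ_surjective⟩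
  have e_symm (f : E) : (e.symm f).1.1 + a • (e.symm f).1.2 = f := e.apply_symm_apply f
  let J : E →ₗ[𝕜] E := LinearMap.fst 𝕜 E E ∘ₗ S.subtype ∘ₗ e.symm.toLinearMap
  have J_norm_le (f : E) : ‖J f‖ ≤ ‖f‖ := by
    have h := norm_fst_le (e.symm f) (e.symm f).2
    rwa [e_symm] at h
  refine ⟨J.mkContinuous 1 fun f => by rw [one_mul]; exact J_norm_le f, J_norm_le, fun p => ?_⟩
  refine ⟨fun hp => congrArg (fun q : S => q.1.1) (e.symm_apply_apply ⟨p, hp⟩), fun hJ => ?_⟩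
  have hfst : (e.symm (p.1 + a • p.2)).1.1 = p.1 := hJ
  have hsnd : (e.symm (p.1 + a • p.2)).1.2 = p.2 := by
    have h := e_symm (p.1 + a • p.2)
    rw [hfst] at h
    exact smul_right_injective E ha (add_left_cancel h)
  exact Prod.ext hfst hsnd ▸ (e.symm (p.1 + a • p.2)).2

end Normed

variable [NormedAddCommGroup E] [InnerProductSpace 𝕜 E]

/-- The linear relation `S` is self-adjoint and nonnegative. -/
structure IsNonnegSelfAdjoint (S : Submodule 𝕜 (E × E)) : Prop where
  adjoint_eq : S.adjoint = S
  re_inner_nonneg : ∀ p ∈ S, 0 ≤ RCLike.re (inner 𝕜 p.2 p.1)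

theorem isNonnegSelfAdjoint_graph [CompleteSpace E] {A : E →ₗ.[𝕜] E} (hA : IsSelfAdjoint A)
    (hA_nonneg : ∀ u : A.domain, 0 ≤ RCLike.re (inner 𝕜 (A u) (u : E))) :
    IsNonnegSelfAdjoint A.graph where
  adjoint_eq := by
    rw [← LinearPMap.adjoint_graph_eq_graph_adjoint hA.dense_domain,
      LinearPMap.isSelfAdjoint_def.1 hA]
  re_inner_nonneg p hp := by
    obtain ⟨u, hu₁, hu₂⟩ := (LinearPMap.mem_graph_iff A).1 hp
    rw [← hu₁, ← hu₂]
    exact hA_nonneg u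

namespace IsNonnegSelfAdjoint

variable {S : Submodule 𝕜 (E × E)} (hS : IsNonnegSelfAdjoint S)
include hS

theorem mem_iff {p : E × E} :
    p ∈ S ↔ ∀ q ∈ S, inner 𝕜 q.2 p.1 = inner 𝕜 q.1 p.2 := by
  conv_lhs => rw [← hS.adjoint_eq]
  simp only [Submodule.mem_adjoint_iff, sub_eq_zero, Prod.forall]

theorem inner_symm {p q : E × E} (hp : p ∈ S) (hq : q ∈ S) :
    inner 𝕜 q.2 p.1 = inner 𝕜 q.1 p.2 :=
  hS.mem_iff.1 hp q hq

theorem isClosed : IsClosed (S : Set (E × E)) := by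
  have h : (S : Set (E × E)) = ⋂ q ∈ S, {p | inner 𝕜 q.2 p.1 = inner 𝕜 q.1 p.2} := by
    ext p
    simp only [Set.mem_iInter]
    exact hS.mem_iff
  rw [h]
  exact isClosed_biInter fun q _ => isClosed_eq (by fun_prop) (by fun_prop)

/-- If `V` is the inverse of the self-adjoint `W`, this is the relation `V S V`. -/
theorem comap_prodMap {V W : E →L[𝕜] E} (hW : W.IsSymmetric) (hVW : V ∘L W = .id 𝕜 E)
    (hWV : W ∘L V = .id 𝕜 E) :
    IsNonnegSelfAdjoint (S.comap (V.prodMap W).toLinearMap) := by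
  have VW_apply (x : E) : V (W x) = x := congr($hVW x)
  have WV_apply (x : E) : W (V x) = x := congr($hWV x)
  have inner_W (x y : E) : inner 𝕜 (W x) y = inner 𝕜 x (W y) := hW x y
  have inner_V (x y : E) : inner 𝕜 (V x) y = inner 𝕜 x (V y) := by
    rw [← WV_apply y, ← inner_W, WV_apply, VW_apply]
  have mem_comap (p : E × E) :
      p ∈ S.comap (V.prodMap W).toLinearMap ↔ (V p.1, W p.2) ∈ S := Iff.rfl
  refine ⟨Submodule.ext fun p => ?_, fun p hp => ?_⟩
  · rw [Submodule.mem_adjoint_iff, mem_comap, hS.mem_iff]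
    simp only [sub_eq_zero]
    refine ⟨fun h q hq => ?_, fun h x y hxy => ?_⟩
    · rw [← inner_V, ← inner_W]
      exact h (W q.1) (V q.2) ((mem_comap _).2 (by rwa [VW_apply, WV_apply]))
    · have h' := h _ ((mem_comap _).1 hxy)
      rwa [← inner_V, ← inner_W, VW_apply, WV_apply] at h'
  · have h := hS.re_inner_nonneg _ ((mem_comap _).1 hp)
    rwa [inner_W, WV_apply] at h

theorem sq_norm_add_sq_norm_le {p : E × E} (hp : p ∈ S) :
    ‖p.1‖ ^ 2 + ‖p.2‖ ^ 2 ≤ ‖p.1 + p.2‖ ^ 2 := by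
  have h := hS.re_inner_nonneg p hp
  rw [inner_re_symm] at h
  rw [norm_add_sq (𝕜 := 𝕜)]
  linarith

theorem norm_fst_le {p : E × E} (hp : p ∈ S) : ‖p.1‖ ≤ ‖p.1 + p.2‖ :=
  le_of_sq_le_sq (by linarith [hS.sq_norm_add_sq_norm_le hp, sq_nonneg ‖p.2‖]) (norm_nonneg _)

theorem norm_snd_le {p : E × E} (hp : p ∈ S) : ‖p.2‖ ≤ ‖p.1 + p.2‖ :=
  le_of_sq_le_sq (by linarith [hS.sq_norm_add_sq_norm_le hp, sq_nonneg ‖p.1‖]) (norm_nonneg _)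

theorem exists_mem_add_eq [CompleteSpace E] (f : E) : ∃ p ∈ S, p.1 + p.2 = f := by
  let Φ : S →L[𝕜] E := (.fst 𝕜 E E + .snd 𝕜 E E) ∘L S.subtypeL
  have : CompleteSpace S := hS.isClosed.completeSpace_coe
  have Φ_antilipschitz : AntilipschitzWith 1 Φ :=
    Φ.antilipschitz_of_bound fun p => by
      rw [NNReal.coe_one, one_mul]
      exact max_le (hS.norm_fst_le p.2) (hS.norm_snd_le p.2)
  have : CompleteSpace Φ.range :=
    (Φ_antilipschitz.isClosed_range Φ.uniformContinuous).completeSpace_coe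
  have range_orthogonal : Φ.rangeᗮ = ⊥ := by
    refine (Submodule.eq_bot_iff _).2 fun z hz => ?_
    have mem_S : (z, -z) ∈ S := hS.mem_iff.2 fun q hq => by
      have h : inner 𝕜 (q.1 + q.2) z = 0 := hz _ ⟨⟨q, hq⟩, rfl⟩
      rw [inner_add_left] at h
      rw [inner_neg_right]
      exact eq_neg_of_add_eq_zero_right h
    have h := hS.re_inner_nonneg _ mem_S
    rw [inner_neg_left, map_neg, inner_self_eq_norm_sq, neg_nonneg] at h
    exact norm_eq_zero.1 (sq_eq_zero_iff.1 (h.antisymm (sq_nonneg _)))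
  obtain ⟨p, hp⟩ : f ∈ Φ.range := by
    rw [(Submodule.orthogonal_eq_bot_iff).1 range_orthogonal]
    trivial
  exact ⟨p, p.2, hp⟩

end IsNonnegSelfAdjoint

end LinearRelations

section SpectralTheory

variable {H : Type*} [NormedAddCommGroup H] [InnerProductSpace ℂ H]

theorem mem_spectrum_of_tendsto {T : H →L[ℂ] H} {r κ : ℝ} (hκ : 0 < κ) {z : ℕ → H}
    (hz : ∀ n, κ ≤ ‖z n‖)
    (hTz : Filter.Tendsto (fun n => r • z n - T (z n)) Filter.atTop (nhds 0)) :
    r ∈ spectrum ℝ T := by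
  rw [spectrum.mem_iff]
  rintro ⟨U, hU⟩
  have z_eq (n : ℕ) : z n = (↑U⁻¹ : H →L[ℂ] H) (r • z n - T (z n)) := by
    have h : (↑U⁻¹ * ↑U : H →L[ℂ] H) (z n) = z n := by rw [U.inv_mul]; rfl
    rw [hU] at h
    exact h.symm
  have z_tendsto : Filter.Tendsto (fun n => ‖z n‖) Filter.atTop (nhds 0) := by
    have h := ((↑U⁻¹ : H →L[ℂ] H).continuous.tendsto 0).comp hTz
    rw [map_zero] at h
    exact (tendsto_zero_iff_norm_tendsto_zero.1 h).congr fun n => congrArg norm (z_eq n).symm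
  exact hκ.not_ge (ge_of_tendsto' z_tendsto hz)

variable [CompleteSpace H]

theorem IsNonnegSelfAdjoint.exists_resolvent {S : Submodule ℂ (H × H)}
    (hS : IsNonnegSelfAdjoint S) :
    ∃ R : H →L[ℂ] H, 0 ≤ R ∧ R ≤ 1 ∧ ∀ p : H × H, p ∈ S ↔ R (p.1 + p.2) = p.1 := by
  obtain ⟨R, hR⟩ := exists_isContractiveResolvent (S := S) one_ne_zero
    (fun p hp => by rw [one_smul]; exact hS.norm_fst_le hp)
    (fun f => by simpa only [one_smul] using hS.exists_mem_add_eq f)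
  have mem_iff (p : H × H) : p ∈ S ↔ R (p.1 + p.2) = p.1 := by rw [hR.mem_iff, one_smul]
  have R_symmetric : R.IsSymmetric := fun f g => by
    obtain ⟨p, hp, rfl⟩ := hS.exists_mem_add_eq f
    obtain ⟨q, hq, rfl⟩ := hS.exists_mem_add_eq g
    change ⟪R (p.1 + p.2), q.1 + q.2⟫ = ⟪p.1 + p.2, R (q.1 + q.2)⟫
    rw [(mem_iff p).1 hp, (mem_iff q).1 hq, inner_add_left, inner_add_right, hS.inner_symm hq hp]
  refine ⟨R, ?_, ?_, mem_iff⟩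
  · rw [ContinuousLinearMap.nonneg_iff_isPositive]
    refine ⟨R_symmetric, fun f => ?_⟩
    obtain ⟨p, hp, rfl⟩ := hS.exists_mem_add_eq f
    have h := hS.re_inner_nonneg p hp
    rw [inner_re_symm] at h
    rw [ContinuousLinearMap.reApplyInnerSelf, (mem_iff p).1 hp, inner_add_right, map_add,
      inner_self_eq_norm_sq]
    positivity
  · rw [ContinuousLinearMap.le_def]
    refine ⟨LinearMap.IsSymmetric.sub LinearMap.IsSymmetric.id R_symmetric, fun f => ?_⟩
    obtain ⟨p, hp, rfl⟩ := hS.exists_mem_add_eq f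
    have h := hS.re_inner_nonneg p hp
    have hsub : (1 - R) (p.1 + p.2) = p.2 := by
      simp [(mem_iff p).1 hp]
    rw [ContinuousLinearMap.reApplyInnerSelf, hsub, inner_add_right, map_add,
      inner_self_eq_norm_sq]
    positivity

theorem mul_cfc_eq_cfc {T : H →L[ℂ] H} (hT : IsSelfAdjoint T) {g : ℝ → ℝ} (hg : Continuous g) :
    T * cfc g T = cfc (fun s => s * g s) T := by
  rw [cfc_mul (fun s => s) g T, cfc_id' ℝ T]

/-- Otherwise a bump function `g` around `r` satisfies `s g(s) = r g(s)` on the spectrum, and the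
nonzero range of `g(T)` consists of eigenvectors. -/
theorem exists_mem_spectrum_ne_of_not_eigenvalue {T : H →L[ℂ] H} (hT : IsSelfAdjoint T) {r : ℝ}
    (hr : r ∈ spectrum ℝ T) (hinj : ∀ x, T x = r • x → x = 0) {ε : ℝ} (hε : 0 < ε) :
    ∃ s ∈ spectrum ℝ T, s ≠ r ∧ |s - r| < ε := by
  by_contra! isolated
  let g : ℝ → ℝ := fun s => max 0 (ε - |s - r|)
  have g_cont : Continuous g := by fun_prop
  have T_mul_g : T * cfc g T = r • cfc g T := by
    rw [mul_cfc_eq_cfc hT g_cont, ← cfc_smul r g T]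
    refine cfc_congr fun s hs => ?_
    by_cases hsr : s = r
    · simp only [hsr, smul_eq_mul]
    · have : g s = 0 := max_eq_left (by linarith [isolated s hs hsr])
      simp only [this, mul_zero, smul_zero]
  have g_eq_zero : cfc g T = 0 := by
    ext x
    exact hinj _ congr($T_mul_g x)
  have h := norm_apply_le_norm_cfc g T hr
  rw [g_eq_zero, norm_zero, norm_le_zero_iff] at h
  simp only [g, sub_self, abs_zero, sub_zero, max_eq_right hε.le] at h
  exact hε.ne' h

theorem exists_continuous_approx_inv {r : ℝ} (hr : r ≠ 0) {δ : ℝ} (hδ : 0 < δ) :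
    ∃ f : ℝ → ℝ, Continuous f ∧ (∀ s, |f s - r⁻¹| ≤ δ) ∧
      ∃ η > 0, ∀ s, |s - r| < η → s * f s = 1 := by
  obtain ⟨η, hη, hη_inv⟩ : ∃ η > 0, ∀ s, |s - r| ≤ η → |s⁻¹ - r⁻¹| ≤ δ ∧ s ≠ 0 := by
    have h : ∀ᶠ s in nhds r, |s⁻¹ - r⁻¹| ≤ δ ∧ s ≠ 0 :=
      ((continuousAt_inv₀ hr).eventually (Metric.closedBall_mem_nhds _ hδ)).and
        (continuousAt_id.eventually_ne hr)
    exact Metric.nhds_basis_closedBall.eventually_iff.1 h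
  let clamp : ℝ → ℝ := fun s => max (r - η) (min s (r + η))
  have clamp_mem (s : ℝ) : |clamp s - r| ≤ η := by
    rw [abs_sub_le_iff]
    constructor
    · linarith [max_le (by linarith : r - η ≤ r + η) (min_le_right s (r + η))]
    · linarith [le_max_left (r - η) (min s (r + η))]
  have clamp_eq {s : ℝ} (hs : |s - r| < η) : clamp s = s := by
    obtain ⟨h₁, h₂⟩ := abs_sub_lt_iff.1 hs
    simp only [clamp]
    rw [min_eq_left (by linarith), max_eq_right (by linarith)]
  have clamp_cont : Continuous clamp := by fun_prop
  refine ⟨fun s => (clamp s)⁻¹, clamp_cont.inv₀ fun s => (hη_inv _ (clamp_mem s)).2,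
    fun s => (hη_inv _ (clamp_mem s)).1, η, hη, fun s hs => ?_⟩
  simp only [clamp_eq hs]
  exact mul_inv_cancel₀ (hη_inv s hs.le).2

theorem exists_approx_inverse_of_mem_spectrum {T : H →L[ℂ] H} (hT : IsSelfAdjoint T) {r : ℝ}
    (hr : r ∈ spectrum ℝ T) (hr₀ : r ≠ 0) {δ : ℝ} (hδ : 0 < δ) :
    ∃ F : H →L[ℂ] H, Commute T F ∧ ‖F - algebraMap ℝ (H →L[ℂ] H) r⁻¹‖ ≤ δ ∧
      ∃ x ≠ 0, T (F x) = x := by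
  obtain ⟨f, f_cont, f_le, η, hη, f_inv⟩ := exists_continuous_approx_inv hr₀ hδ
  let g : ℝ → ℝ := fun s => max 0 (η - |s - r|)
  have g_cont : Continuous g := by fun_prop
  have inverse_on_bump : T * cfc f T * cfc g T = cfc g T := by
    rw [mul_assoc, ← cfc_mul f g T, mul_cfc_eq_cfc hT (by fun_prop)]
    refine cfc_congr fun s _ => ?_
    by_cases hs : |s - r| < η
    · simp only [← mul_assoc, f_inv s hs, one_mul]
    · have : g s = 0 := max_eq_left (by linarith)
      simp only [this, mul_zero]
  obtain ⟨y, hy⟩ : ∃ y, cfc g T y ≠ 0 := by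
    by_contra! g_eq_zero
    have h := norm_apply_le_norm_cfc g T hr
    rw [show cfc g T = 0 from ContinuousLinearMap.ext g_eq_zero, norm_zero, norm_le_zero_iff] at h
    simp only [g, sub_self, abs_zero, sub_zero, max_eq_right hη.le] at h
    exact hη.ne' h
  refine ⟨cfc f T, ?_, ?_, cfc g T y, hy, congr($inverse_on_bump y)⟩
  · conv_lhs => rw [← cfc_id' ℝ T hT]
    exact cfc_commute_cfc _ _ T
  · rw [← cfc_const r⁻¹ T hT, ← cfc_sub f _ T]
    exact norm_cfc_le hδ.le fun s _ => f_le s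

/-- With `R = (1 + 𝒜)⁻¹`, the pair `l, L` is a small spectral value of `𝒜` together with a bounded
operator that is close to `l` and agrees with `𝒜` on `x`. -/
theorem exists_small_spectral_piece {R : H →L[ℂ] H} (hR₀ : 0 ≤ R) (hR₁ : R ≤ 1)
    (hspec : 1 ∈ spectrum ℝ R) (hinj : ∀ x, R x = x → x = 0) {l₀ δ : ℝ} (hl₀ : 0 < l₀)
    (hδ : 0 < δ) :
    ∃ l > 0, l < l₀ ∧ ∃ L : H →L[ℂ] H, Commute R L ∧
      ‖L - algebraMap ℝ (H →L[ℂ] H) l‖ ≤ δ * l ∧ ∃ x ≠ 0, R (x + L x) = x := by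
  have hR : IsSelfAdjoint R := .of_nonneg hR₀
  obtain ⟨ε, hε, hε_inv⟩ : ∃ ε > 0, ∀ s : ℝ, |s - 1| < ε → s⁻¹ < 1 + l₀ ∧ 0 < s := by
    have h : ∀ᶠ s : ℝ in nhds 1, s⁻¹ < 1 + l₀ ∧ 0 < s :=
      ((continuousAt_inv₀ one_ne_zero).eventually_lt continuousAt_const
        (by rw [inv_one]; linarith)).and (lt_mem_nhds one_pos)
    exact Metric.nhds_basis_ball.eventually_iff.1 h
  obtain ⟨s, hs, hs₁, hsε⟩ := exists_mem_spectrum_ne_of_not_eigenvalue hR hspec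
    (fun x hx => hinj x (by rwa [one_smul] at hx)) hε
  obtain ⟨hs_inv, hs_pos⟩ := hε_inv s hsε
  have hs_lt : s < 1 := by
    have h := (le_algebraMap_iff_spectrum_le (r := (1 : ℝ)) (a := R)).1 (by rwa [map_one]) s hs
    exact lt_of_le_of_ne h hs₁
  have hl : 0 < s⁻¹ - 1 := sub_pos.2 ((one_lt_inv₀ hs_pos).2 hs_lt)
  obtain ⟨F, hRF, hF, x, hx, hRFx⟩ :=
    exists_approx_inverse_of_mem_spectrum hR hs hs_pos.ne' (mul_pos hδ hl)
  refine ⟨s⁻¹ - 1, hl, by linarith, F - 1, hRF.sub_right (Commute.one_right R), ?_, x, hx, ?_⟩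
  · rwa [map_sub, map_one, sub_sub_sub_cancel_right]
  · simpa using hRFx

end SpectralTheory

section Exponential

open NormedSpace

variable {𝔸 : Type*} [NormedRing 𝔸] [NormedAlgebra ℝ 𝔸]

theorem norm_exp_le_exp_norm (h₁ : ‖(1 : 𝔸)‖ ≤ 1) (x : 𝔸) : ‖exp x‖ ≤ Real.exp ‖x‖ := by
  have hsum : HasSum (fun n : ℕ => ((n.factorial : ℝ)⁻¹) • ‖x‖ ^ n) (Real.exp ‖x‖) := by
    rw [Real.exp_eq_exp_ℝ]
    exact exp_series_hasSum_exp' (𝕂 := ℝ) ‖x‖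
  rw [exp_eq_tsum ℝ]
  refine tsum_of_norm_bounded hsum fun n => ?_
  rw [norm_smul, Real.norm_of_nonneg (by positivity), smul_eq_mul]
  gcongr
  rcases n.eq_zero_or_pos with rfl | hn
  · simpa using h₁
  · exact norm_pow_le' x hn

variable [CompleteSpace 𝔸]

/-- `exp (tP) = e^{-at} exp (t(P + a))`. -/
theorem norm_exp_smul_le_one (h₁ : ‖(1 : 𝔸)‖ ≤ 1) {P : 𝔸} {a t : ℝ} (ht : 0 ≤ t)
    (hP : ‖P + algebraMap ℝ 𝔸 a‖ ≤ a) : ‖exp (t • P)‖ ≤ 1 := by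
  have split : t • P = t • (P + algebraMap ℝ 𝔸 a) + algebraMap ℝ 𝔸 (-(t * a)) := by
    rw [smul_add, map_neg, Algebra.smul_def t (algebraMap ℝ 𝔸 a), ← map_mul,
      add_neg_cancel_right]
  let := NormedAlgebra.restrictScalars ℚ ℝ 𝔸
  calc ‖exp (t • P)‖
      = ‖exp (t • (P + algebraMap ℝ 𝔸 a)) * algebraMap ℝ 𝔸 (Real.exp (-(t * a)))‖ := by
        rw [split, exp_add_of_commute (Algebra.commutes _ _).symm, Real.exp_eq_exp_ℝ,
          algebraMap_exp_comm]
    _ ≤ Real.exp ‖t • (P + algebraMap ℝ 𝔸 a)‖ * Real.exp (-(t * a)) := by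
        refine (norm_mul_le _ _).trans ?_
        gcongr
        · exact norm_exp_le_exp_norm h₁ _
        · rw [norm_algebraMap, Real.norm_of_nonneg (Real.exp_nonneg _)]
          exact mul_le_of_le_one_right (Real.exp_nonneg _) h₁
    _ ≤ Real.exp (t * a) * Real.exp (-(t * a)) := by
        gcongr
        rw [norm_smul, Real.norm_of_nonneg ht]
        gcongr
    _ = 1 := by rw [← Real.exp_add, add_neg_cancel, Real.exp_zero]

theorem hasDerivAt_exp_mul_exp {P Q : 𝔸} (hPQ : Commute P Q) (t s : ℝ) :
    HasDerivAt (fun r : ℝ => exp ((t - r) • Q) * exp (r • P))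
      (exp ((t - s) • Q) * exp (s • P) * (P - Q)) s := by
  have hQ : HasDerivAt (fun r : ℝ => exp ((t - r) • Q)) (-(exp ((t - s) • Q) * Q)) s := by
    refine ((hasDerivAt_exp_smul_const (𝕂 := ℝ) Q (t - s)).scomp s
      ((hasDerivAt_id s).const_sub t)).congr_deriv ?_
    rw [neg_smul, one_smul]
  refine (hQ.mul (hasDerivAt_exp_smul_const (𝕂 := ℝ) P s)).congr_deriv ?_
  have hQP : Q * exp (s • P) = exp (s • P) * Q := (hPQ.symm.smul_right s).exp_right
  rw [neg_mul, mul_assoc _ Q, hQP, mul_sub, mul_assoc, mul_assoc]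
  abel

variable {E : Type*} [NormedAddCommGroup E] [NormedSpace ℂ E] [CompleteSpace E]

theorem hasDerivAt_exp_smul_apply (P : E →L[ℂ] E) (z : E) (t : ℝ) :
    HasDerivAt (fun s : ℝ => exp (s • P) z) (exp (t • P) (P z)) t :=
  ((ContinuousLinearMap.apply ℂ E z).restrictScalars ℝ).hasFDerivAt.comp_hasDerivAt t
    (hasDerivAt_exp_smul_const (𝕂 := ℝ) P t)

theorem norm_exp_smul_apply_sub_le {P Q : E →L[ℂ] E} (hPQ : Commute P Q)
    (hP : ∀ t : ℝ, 0 ≤ t → ‖exp (t • P)‖ ≤ 1) (hQ : ∀ t : ℝ, 0 ≤ t → ‖exp (t • Q)‖ ≤ 1)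
    (z : E) {t : ℝ} (ht : 0 ≤ t) :
    ‖exp (t • P) z - exp (t • Q) z‖ ≤ t * ‖P z - Q z‖ := by
  let f : ℝ → E := fun s => exp ((t - s) • Q) (exp (s • P) z)
  have f_deriv (s : ℝ) : HasDerivAt f (exp ((t - s) • Q) (exp (s • P) (P z - Q z))) s :=
    ((ContinuousLinearMap.apply ℂ E z).restrictScalars ℝ).hasFDerivAt.comp_hasDerivAt s
      (hasDerivAt_exp_mul_exp hPQ t s)
  have f_deriv_le (s : ℝ) (hs : s ∈ Set.Ico 0 t) :
      ‖exp ((t - s) • Q) (exp (s • P) (P z - Q z))‖ ≤ ‖P z - Q z‖ :=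
    ((exp ((t - s) • Q)).le_of_opNorm_le_of_le (hQ _ (sub_nonneg.2 hs.2.le))
      ((exp (s • P)).le_of_opNorm_le (hP s hs.1) _)).trans_eq (by ring)
  have h := norm_image_sub_le_of_norm_deriv_le_segment'
    (fun s _ => (f_deriv s).hasDerivWithinAt) f_deriv_le t (Set.right_mem_Icc.2 ht)
  simpa [f, mul_comm] using h

end Exponential

section HilleYosida

open NormedSpace Filter Topology Set

variable {E : Type*} [NormedAddCommGroup E] [NormedSpace ℂ E]

theorem tendsto_apply_zero_of_dense {ι : Type*} {l : Filter ι} {L : ι → E →L[ℂ] E} {D : Set E}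
    (hD : Dense D) {K : ℝ} (hL : ∀ᶠ i in l, ‖L i‖ ≤ K)
    (hLD : ∀ z ∈ D, Tendsto (fun i => L i z) l (𝓝 0)) (z : E) :
    Tendsto (fun i => L i z) l (𝓝 0) := by
  rw [Metric.tendsto_nhds]
  intro ε hε
  have hK : 0 < 2 * (|K| + 1) := by positivity
  obtain ⟨z', hz'D, hz'⟩ := hD.exists_dist_lt z (div_pos hε hK)
  filter_upwards [hL, Metric.tendsto_nhds.1 (hLD z' hz'D) (ε / 2) (half_pos hε)] with i hi hiz'
  rw [dist_zero_right] at hiz' ⊢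
  rw [dist_eq_norm, lt_div_iff₀ hK] at hz'
  have hLz : ‖L i (z - z')‖ ≤ (|K| + 1) * ‖z - z'‖ :=
    (L i).le_of_opNorm_le (by linarith [le_abs_self K]) _
  calc ‖L i z‖ = ‖L i (z - z') + L i z'‖ := by rw [map_sub, sub_add_cancel]
    _ ≤ ‖L i (z - z')‖ + ‖L i z'‖ := norm_add_le _ _
    _ < ε := by linarith

/-- The Yosida approximation `ε⁻¹(J - 1)`, where `J` is the resolvent `(1 - εM)⁻¹` of a relation
`M`; on the domain of `M` it equals `J M`. -/
noncomputable def yosida (ε : ℝ) (J : E →L[ℂ] E) : E →L[ℂ] E := ε⁻¹ • (J - 1)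

theorem add_neg_smul_yosida (J : E →L[ℂ] E) {ε : ℝ} (hε : ε ≠ 0) (f : E) :
    J f + (-ε : ℂ) • yosida ε J f = f := by
  change J f + (-ε : ℂ) • (ε⁻¹ : ℝ) • (J f - f) = f
  rw [neg_smul, Complex.coe_smul, smul_inv_smul₀ hε]
  abel

namespace IsContractiveResolvent

variable {M : Submodule ℂ (E × E)} {ε μ : ℝ} {J K : E →L[ℂ] E}

theorem norm_le_one (hJ : IsContractiveResolvent M (-ε : ℂ) J) : ‖J‖ ≤ 1 :=
  J.opNorm_le_bound zero_le_one fun f => by rw [one_mul]; exact hJ.norm_apply_le f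

theorem mk_yosida_mem (hJ : IsContractiveResolvent M (-ε : ℂ) J) (hε : 0 < ε) (f : E) :
    (J f, yosida ε J f) ∈ M := by
  rw [hJ.mem_iff, add_neg_smul_yosida J hε.ne']

theorem yosida_apply (hJ : IsContractiveResolvent M (-ε : ℂ) J) (hε : 0 < ε) {p : E × E}
    (hp : p ∈ M) : yosida ε J p.1 = J p.2 := by
  have h := (hJ.mem_iff p).1 hp
  rw [neg_smul, ← sub_eq_add_neg, map_sub, map_smul, Complex.coe_smul] at h
  change ε⁻¹ • (J p.1 - p.1) = J p.2
  rw [inv_smul_eq_iff₀ hε.ne', sub_eq_iff_eq_add']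
  exact sub_eq_iff_eq_add.1 h

theorem commute (hJ : IsContractiveResolvent M (-ε : ℂ) J) (hε : 0 < ε)
    (hK : IsContractiveResolvent M (-μ : ℂ) K) (hμ : 0 < μ) : Commute J K := by
  have map_mem {p : E × E} (hp : p ∈ M) : (J p.1, J p.2) ∈ M := by
    rw [← hJ.yosida_apply hε hp]
    exact hJ.mk_yosida_mem hε p.1
  ext f
  have h := (hK.mem_iff _).1 (map_mem (hK.mk_yosida_mem hμ f))
  rw [← map_smul, ← map_add, add_neg_smul_yosida K hμ.ne'] at h
  exact h.symm

theorem commute_yosida (hJ : IsContractiveResolvent M (-ε : ℂ) J) (hε : 0 < ε)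
    (hK : IsContractiveResolvent M (-μ : ℂ) K) (hμ : 0 < μ) :
    Commute (yosida ε J) (yosida μ K) :=
  ((((hJ.commute hε hK hμ).sub_left (Commute.one_left K)).sub_right
    (Commute.one_right _)).smul_left _).smul_right _

theorem norm_apply_fst_sub_le (hJ : IsContractiveResolvent M (-ε : ℂ) J) (hε : 0 < ε) {p : E × E}
    (hp : p ∈ M) : ‖J p.1 - p.1‖ ≤ ε * ‖p.2‖ := by
  have h : J p.1 - p.1 = ε • J p.2 := by
    rw [← hJ.yosida_apply hε hp]
    exact (smul_inv_smul₀ hε.ne' _).symm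
  rw [h, norm_smul, Real.norm_of_nonneg hε.le]
  gcongr
  exact hJ.norm_apply_le _

theorem isClosed (hJ : IsContractiveResolvent M (-ε : ℂ) J) : IsClosed (M : Set (E × E)) := by
  have h : (M : Set (E × E)) = {p | J (p.1 + (-ε : ℂ) • p.2) = p.1} := Set.ext hJ.mem_iff
  rw [h]
  exact isClosed_eq (by fun_prop) (by fun_prop)

theorem norm_exp_yosida_le [CompleteSpace E] (hJ : IsContractiveResolvent M (-ε : ℂ) J)
    (hε : 0 < ε) {t : ℝ} (ht : 0 ≤ t) : ‖exp (t • yosida ε J)‖ ≤ 1 := by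
  refine norm_exp_smul_le_one (ContinuousLinearMap.norm_id_le (𝕜 := ℂ) (E := E)) ht (a := ε⁻¹) ?_
  rw [yosida, Algebra.algebraMap_eq_smul_one, ← smul_add, sub_add_cancel, norm_smul,
    Real.norm_of_nonneg (inv_nonneg.2 hε.le)]
  exact mul_le_of_le_one_right (inv_nonneg.2 hε.le) hJ.norm_le_one

end IsContractiveResolvent

/-- `M` satisfies the hypotheses of the Hille–Yosida theorem for contraction semigroups. -/
structure IsContractionGenerator (M : Submodule ℂ (E × E)) : Prop where
  exists_resolvent : ∀ ε > (0 : ℝ), ∃ J : E →L[ℂ] E, IsContractiveResolvent M (-ε : ℂ) J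
  dense_domain : Dense (Prod.fst '' (M : Set (E × E)))

section Approximation

variable {M : Submodule ℂ (E × E)} {ε : ℕ → ℝ} {J : ℕ → E →L[ℂ] E}

theorem tendsto_resolvent_apply (hM : Dense (Prod.fst '' (M : Set (E × E))))
    (hε : ∀ n, 0 < ε n) (hε_lim : Tendsto ε atTop (𝓝 0))
    (hJ : ∀ n, IsContractiveResolvent M (-ε n : ℂ) (J n)) (f : E) :
    Tendsto (fun n => J n f) atTop (𝓝 f) := by
  have bound (n : ℕ) : ‖J n - 1‖ ≤ 1 + 1 :=
    (norm_sub_le _ _).trans (add_le_add (hJ n).norm_le_one ContinuousLinearMap.norm_id_le)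
  have lim_domain : ∀ z ∈ Prod.fst '' (M : Set (E × E)),
      Tendsto (fun n => (J n - 1) z) atTop (𝓝 0) := by
    rintro _ ⟨p, hp, rfl⟩
    refine squeeze_zero_norm (fun n => (hJ n).norm_apply_fst_sub_le (hε n) hp) ?_
    simpa using hε_lim.mul_const ‖p.2‖
  have h := tendsto_apply_zero_of_dense hM (.of_forall bound) lim_domain f
  exact tendsto_sub_nhds_zero_iff.1 h

variable [CompleteSpace E]

theorem uniformCauchySeqOn_exp_yosida (hM : Dense (Prod.fst '' (M : Set (E × E))))
    (hε : ∀ n, 0 < ε n) (hε_lim : Tendsto ε atTop (𝓝 0))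
    (hJ : ∀ n, IsContractiveResolvent M (-ε n : ℂ) (J n)) (T : ℝ) (z : E) :
    UniformCauchySeqOn (fun n (t : ℝ) => exp (t • yosida (ε n) (J n)) z) atTop (Icc 0 T) := by
  let U (n : ℕ) (t : ℝ) : E →L[ℂ] E := exp (t • yosida (ε n) (J n))
  have U_le (n : ℕ) {t : ℝ} (ht : 0 ≤ t) : ‖U n t‖ ≤ 1 := (hJ n).norm_exp_yosida_le (hε n) ht
  let l : Filter ((ℕ × ℕ) × ℝ) := (atTop ×ˢ atTop) ×ˢ 𝓟 (Icc 0 T)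
  have mem_Icc : ∀ᶠ i in l, i.2 ∈ Icc 0 T := tendsto_snd.eventually (mem_principal_self _)
  have bound : ∀ᶠ i in l, ‖U i.1.1 i.2 - U i.1.2 i.2‖ ≤ 1 + 1 := by
    filter_upwards [mem_Icc] with i hi
    exact (norm_sub_le _ _).trans (add_le_add (U_le _ hi.1) (U_le _ hi.1))
  have lim_domain : ∀ z ∈ Prod.fst '' (M : Set (E × E)),
      Tendsto (fun i : (ℕ × ℕ) × ℝ => (U i.1.1 i.2 - U i.1.2 i.2) z) l (𝓝 0) := by
    rintro _ ⟨p, hp, rfl⟩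
    have lim_J : Tendsto (fun i : (ℕ × ℕ) × ℝ => T * ‖J i.1.1 p.2 - J i.1.2 p.2‖) l (𝓝 0) := by
      have h := tendsto_resolvent_apply hM hε hε_lim hJ p.2
      simpa using ((h.comp (tendsto_fst.comp tendsto_fst)).sub
        (h.comp (tendsto_snd.comp tendsto_fst))).norm.const_mul T
    refine squeeze_zero_norm' ?_ lim_J
    filter_upwards [mem_Icc] with i hi
    refine (norm_exp_smul_apply_sub_le ((hJ _).commute_yosida (hε _) (hJ _) (hε _))
      (fun t => U_le _) (fun t => U_le _) p.1 hi.1).trans ?_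
    rw [(hJ _).yosida_apply (hε _) hp, (hJ _).yosida_apply (hε _) hp]
    gcongr
    exact hi.2
  have h := (tendsto_apply_zero_of_dense hM bound lim_domain z).neg
  rw [neg_zero] at h
  rw [uniformCauchySeqOn_iff_uniformCauchySeqOnFilter,
    SeminormedAddGroup.uniformCauchySeqOnFilter_iff_tendstoUniformlyOnFilter_zero]
  refine tendsto_prod_filter_iff.1 (h.congr fun i => ?_)
  rw [sub_apply, neg_sub, ← neg_add_eq_sub]
  rfl

theorem uniformCauchySeqOn_exp_yosida_resolvent (hM : Dense (Prod.fst '' (M : Set (E × E))))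
    (hε : ∀ n, 0 < ε n) (hε_lim : Tendsto ε atTop (𝓝 0))
    (hJ : ∀ n, IsContractiveResolvent M (-ε n : ℂ) (J n)) (T : ℝ) (z : E) :
    UniformCauchySeqOn (fun n (t : ℝ) => exp (t • yosida (ε n) (J n)) (J n z)) atTop
      (Icc 0 T) := by
  have lim_error : TendstoUniformlyOn
      (fun n (t : ℝ) => exp (t • yosida (ε n) (J n)) (J n z - z)) 0 atTop (Icc 0 T) := by
    have lim_J := tendsto_iff_norm_sub_tendsto_zero.1 (tendsto_resolvent_apply hM hε hε_lim hJ z)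
    refine SeminormedAddGroup.tendstoUniformlyOn_zero.2 fun δ hδ => ?_
    filter_upwards [lim_J.eventually (gt_mem_nhds hδ)] with n hn t ht
    have h := (exp (t • yosida (ε n) (J n))).le_of_opNorm_le
      ((hJ n).norm_exp_yosida_le (hε n) ht.1) (J n z - z)
    exact (h.trans_eq (one_mul _)).trans_lt hn
  have h := (uniformCauchySeqOn_exp_yosida hM hε hε_lim hJ T z).add lim_error.uniformCauchySeqOn
  convert h using 3 with n t
  simp only [Pi.add_apply, map_sub, add_sub_cancel]

end Approximation

theorem exists_tendstoLocallyUniformlyOn_Ici {E : Type*} [NormedAddCommGroup E]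
    [CompleteSpace E] {F : ℕ → ℝ → E}
    (hF : ∀ T, UniformCauchySeqOn F atTop (Icc 0 T)) :
    ∃ G : ℝ → E, TendstoLocallyUniformlyOn F G atTop (Ici 0) := by
  choose! G hG using fun t (ht : t ∈ Ici (0 : ℝ)) =>
    cauchySeq_tendsto_of_complete ((hF t).cauchySeq (right_mem_Icc.2 ht))
  refine ⟨G, tendstoLocallyUniformlyOn_of_forall_exists_nhds fun t _ => ⟨Icc 0 (t + 1), ?_,
    (hF (t + 1)).tendstoUniformlyOn_of_tendsto fun s hs => hG s hs.1⟩⟩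
  exact inter_mem_nhdsWithin _ (Iic_mem_nhds (lt_add_one t))

theorem hasDerivWithinAt_Ici_of_tendstoLocallyUniformlyOn {f f' : ℕ → ℝ → E} {g g' : ℝ → E}
    (hf : TendstoLocallyUniformlyOn f g atTop (Ici 0))
    (hf' : TendstoLocallyUniformlyOn f' g' atTop (Ici 0))
    (hderiv : ∀ n t, HasDerivAt (f n) (f' n t) t) (hf'_cont : ∀ n, ContinuousOn (f' n) (Ici 0))
    {t : ℝ} (ht : 0 ≤ t) : HasDerivWithinAt g (g' t) (Ici 0) t := by
  have interior {s : ℝ} (hs : s ∈ Ioi (0 : ℝ)) : HasDerivAt g (g' s) s :=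
    hasDerivAt_of_tendstoLocallyUniformlyOn isOpen_Ioi (hf'.mono Ioi_subset_Ici_self)
      (.of_forall fun n s _ => hderiv n s)
      (fun s hs => hf.tendsto_at (Ioi_subset_Ici_self hs)) hs
  have g_cont : ContinuousOn g (Ici 0) :=
    hf.continuousOn (.of_forall fun n => fun s _ => (hderiv n s).continuousAt.continuousWithinAt)
  have g'_cont : ContinuousOn g' (Ici 0) := hf'.continuousOn (.of_forall hf'_cont)
  rcases ht.eq_or_lt with rfl | ht
  · refine hasDerivWithinAt_Ici_of_tendsto_deriv
      (fun s hs => (interior hs).differentiableAt.differentiableWithinAt)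
      ((g_cont 0 self_mem_Ici).mono Ioi_subset_Ici_self) self_mem_nhdsWithin ?_
    refine ((g'_cont 0 self_mem_Ici).mono Ioi_subset_Ici_self).congr' ?_
    filter_upwards [self_mem_nhdsWithin] with s hs using (interior hs).deriv.symm
  · exact (interior ht).hasDerivWithinAt

/-- Yosida's argument: the solutions of `X' = ε⁻¹(Jε - 1) X` converge as `ε → 0`. -/
theorem IsContractionGenerator.exists_solution [CompleteSpace E] {M : Submodule ℂ (E × E)}
    (hM : IsContractionGenerator M) {p : E × E} (hp : p ∈ M) :
    ∃ X X' : ℝ → E, X 0 = p.1 ∧ (∀ t, 0 ≤ t → HasDerivWithinAt X (X' t) (Ici 0) t) ∧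
      ContinuousOn X' (Ici 0) ∧ ∀ t, 0 ≤ t → (X t, X' t) ∈ M := by
  let ε : ℕ → ℝ := fun n => 1 / ((n : ℝ) + 1)
  have hε (n : ℕ) : 0 < ε n := by positivity
  have hε_lim : Tendsto ε atTop (𝓝 0) := tendsto_one_div_add_atTop_nhds_zero_nat
  choose J hJ using fun n => hM.exists_resolvent (ε n) (hε n)
  let U (n : ℕ) (t : ℝ) : E →L[ℂ] E := exp (t • yosida (ε n) (J n))
  have J_lim := tendsto_resolvent_apply hM.dense_domain hε hε_lim hJ
  have U_cauchy := uniformCauchySeqOn_exp_yosida hM.dense_domain hε hε_lim hJ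
  have X'_cauchy (T : ℝ) : UniformCauchySeqOn (fun n t => U n t (J n p.2)) atTop (Icc 0 T) :=
    uniformCauchySeqOn_exp_yosida_resolvent hM.dense_domain hε hε_lim hJ T p.2
  obtain ⟨X, hX⟩ := exists_tendstoLocallyUniformlyOn_Ici fun T => U_cauchy T p.1
  obtain ⟨X', hX'⟩ := exists_tendstoLocallyUniformlyOn_Ici X'_cauchy
  have U_deriv (n : ℕ) (z : E) (t : ℝ) :
      HasDerivAt (fun s => U n s z) (U n t (yosida (ε n) (J n) z)) t :=
    hasDerivAt_exp_smul_apply _ z t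
  have U_cont (n : ℕ) (z : E) : ContinuousOn (fun t => U n t z) (Ici 0) :=
    fun t _ => (U_deriv n z t).continuousAt.continuousWithinAt
  refine ⟨X, X', ?_, fun t ht => ?_, ?_, fun t ht => ?_⟩
  · refine tendsto_nhds_unique (hX.tendsto_at self_mem_Ici) ?_
    simp
  · refine hasDerivWithinAt_Ici_of_tendstoLocallyUniformlyOn hX hX' (fun n s => ?_)
      (fun n => U_cont n _) ht
    rw [← (hJ n).yosida_apply (hε n) hp]
    exact U_deriv n p.1 s
  · exact hX'.continuousOn (.of_forall fun n => U_cont n _)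
  · have mem (n : ℕ) : (J n (U n t p.1), U n t (J n p.2)) ∈ M := by
      have U_comm : U n t (yosida (ε n) (J n) p.1) = yosida (ε n) (J n) (U n t p.1) :=
        DFunLike.congr_fun ((Commute.refl (yosida (ε n) (J n))).smul_left t).exp_left.eq p.1
      rw [← (hJ n).yosida_apply (hε n) hp, U_comm]
      exact (hJ n).mk_yosida_mem (hε n) _
    have JX_lim : Tendsto (fun n => J n (U n t p.1)) atTop (𝓝 (X t)) := by
      have X_lim := tendsto_iff_norm_sub_tendsto_zero.1 (hX.tendsto_at ht)
      have error_lim : Tendsto (fun n => J n (U n t p.1 - X t)) atTop (𝓝 0) :=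
        squeeze_zero_norm (fun n => (hJ n).norm_apply_le _) X_lim
      simpa only [map_sub, sub_add_cancel, zero_add] using error_lim.add (J_lim (X t))
    exact (hJ 0).isClosed.mem_of_tendsto (JX_lim.prodMk_nhds (hX'.tendsto_at ht)) (.of_forall mem)

end HilleYosida

section WaveGenerator

open Set

variable {E : Type*} [NormedAddCommGroup E] [InnerProductSpace ℂ E]

/-- The Lumer–Phillips criterion. -/
theorem isContractionGenerator_of_dissipative {M : Submodule ℂ (E × E)}
    (dissipative : ∀ p ∈ M, (⟪p.2, p.1⟫).re ≤ 0)
    (surj : ∀ ε > (0 : ℝ), ∀ f, ∃ p ∈ M, p.1 + (-ε : ℂ) • p.2 = f)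
    (dense_domain : Dense (Prod.fst '' (M : Set (E × E)))) : IsContractionGenerator M where
  dense_domain := dense_domain
  exists_resolvent ε hε := by
    have neg_ε_ne_zero : (-ε : ℂ) ≠ 0 := neg_ne_zero.2 (Complex.ofReal_ne_zero.2 hε.ne')
    refine exists_isContractiveResolvent neg_ε_ne_zero (fun p hp => ?_) (surj ε hε)
    have cross : 0 ≤ (⟪p.1, (-ε : ℂ) • p.2⟫).re := by
      have h := mul_nonpos_of_nonneg_of_nonpos hε.le (dissipative p hp)
      rw [← inner_conj_symm, Complex.conj_re] at h
      rw [inner_smul_right, ← Complex.ofReal_neg, Complex.re_ofReal_mul]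
      linarith
    refine le_of_sq_le_sq ?_ (norm_nonneg _)
    rw [norm_add_sq (𝕜 := ℂ), RCLike.re_eq_complex_re]
    linarith [sq_nonneg ‖(-ε : ℂ) • p.2‖]

variable {H : Type*} [NormedAddCommGroup H] [InnerProductSpace ℂ H]

/-- The generator `(y, w) ↦ (A^{1/2} w, -A^{1/2} y - B w)` of the damped wave equation written as a
first order system for `y = A^{1/2} u` and `w = u'`, where `A^{1/2} = S C⁻¹`. The pair `(y, w)`
is parametrized as `(C k, C g)`. -/
def waveRelation (C S B : H →L[ℂ] H) :
    Submodule ℂ (WithLp 2 (H × H) × WithLp 2 (H × H)) :=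
  LinearMap.range <|
    ((WithLp.linearEquiv 2 ℂ (H × H)).symm.toLinearMap ∘ₗ
        (C.toLinearMap.prodMap C.toLinearMap)).prod
      ((WithLp.linearEquiv 2 ℂ (H × H)).symm.toLinearMap ∘ₗ
        ((S ∘L .snd ℂ H H).prod (-(S ∘L .fst ℂ H H) - B ∘L C ∘L .snd ℂ H H)).toLinearMap)

theorem mem_waveRelation {C S B : H →L[ℂ] H} {p : WithLp 2 (H × H) × WithLp 2 (H × H)} :
    p ∈ waveRelation C S B ↔ ∃ k g : H,
      (WithLp.toLp 2 (C k, C g), WithLp.toLp 2 (S g, -S k - B (C g))) = p := by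
  simp only [waveRelation, LinearMap.mem_range, Prod.exists]
  rfl

variable [CompleteSpace H]

/-- The bounded operators `C = (1 + A)^{-1/2}` and `S = A^{1/2} (1 + A)^{-1/2}` attached to a
nonnegative self-adjoint operator `A`, which let one work with the energy space `D(A^{1/2})`
without introducing the unbounded operator `A^{1/2} = S C⁻¹`. -/
structure IsCosSinPair (C S : H →L[ℂ] H) : Prop where
  isSelfAdjoint_cos : IsSelfAdjoint C
  isSelfAdjoint_sin : IsSelfAdjoint S
  commute : Commute C S
  cos_sq_add_sin_sq : C * C + S * S = 1
  denseRange_cos : DenseRange C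

namespace IsCosSinPair

variable {C S B : H →L[ℂ] H} (hCS : IsCosSinPair C S)
include hCS

theorem inner_cos (x y : H) : ⟪C x, y⟫ = ⟪x, C y⟫ :=
  hCS.isSelfAdjoint_cos.isSymmetric x y

theorem inner_sin (x y : H) : ⟪S x, y⟫ = ⟪x, S y⟫ :=
  hCS.isSelfAdjoint_sin.isSymmetric x y

theorem sin_cos (x : H) : S (C x) = C (S x) :=
  congr($hCS.commute.symm.eq x)

theorem cos_cos_add_sin_sin (x : H) : C (C x) + S (S x) = x :=
  congr($hCS.cos_sq_add_sin_sq x)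

theorem dissipative_waveRelation (hB : 0 ≤ B) {p : WithLp 2 (H × H) × WithLp 2 (H × H)}
    (hp : p ∈ waveRelation C S B) : (⟪p.2, p.1⟫).re ≤ 0 := by
  obtain ⟨k, g, rfl⟩ := mem_waveRelation.1 hp
  have damping : 0 ≤ (⟪B (C g), C g⟫).re :=
    ((ContinuousLinearMap.nonneg_iff_isPositive B).1 hB).re_inner_nonneg_left _
  have swap : ⟪S g, C k⟫ = (starRingEnd ℂ) ⟪S k, C g⟫ := by
    rw [inner_conj_symm, inner_sin hCS, inner_cos hCS, sin_cos hCS]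
  have expand : ⟪WithLp.toLp 2 (S g, -S k - B (C g)), WithLp.toLp 2 (C k, C g)⟫ =
      (starRingEnd ℂ) ⟪S k, C g⟫ - ⟪S k, C g⟫ - ⟪B (C g), C g⟫ := by
    simp only [WithLp.prod_inner_apply, swap, inner_sub_left, inner_neg_left]
    ring
  rw [expand, Complex.sub_re, Complex.sub_re, Complex.conj_re]
  linarith

theorem dense_domain_waveRelation :
    Dense (Prod.fst '' (waveRelation C S B : Set (WithLp 2 (H × H) × WithLp 2 (H × H)))) := by
  have toLp_dense : DenseRange fun q : H × H => WithLp.toLp 2 (C q.1, C q.2) :=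
    (WithLp.homeomorphProd 2 H H).symm.surjective.denseRange.comp
      (hCS.denseRange_cos.prodMap hCS.denseRange_cos)
      (WithLp.homeomorphProd 2 H H).symm.continuous
  refine toLp_dense.mono ?_
  rintro _ ⟨⟨k, g⟩, rfl⟩
  exact ⟨_, mem_waveRelation.2 ⟨k, g, rfl⟩, rfl⟩

theorem isUnit_sin_sq_add_cos_sq (hB : 0 ≤ B) {ε : ℝ} (hε : 0 < ε) :
    IsUnit ((ε ^ 2) • (S * S) + C * C + ε • (C * B * C)) := by
  have mul_self_nonneg {T : H →L[ℂ] H} (hT : IsSelfAdjoint T) : 0 ≤ T * T := by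
    simpa only [hT.star_eq] using star_mul_self_nonneg T
  have CBC_nonneg : 0 ≤ C * B * C := hCS.isSelfAdjoint_cos.conjugate_nonneg hB
  let m : ℝ := min (ε ^ 2) 1
  have hm : 0 < m := lt_min (by positivity) one_pos
  refine CStarAlgebra.isUnit_of_le (algebraMap ℝ (H →L[ℂ] H) m) ?_ ?_
  · calc algebraMap ℝ (H →L[ℂ] H) m = m • (S * S) + m • (C * C) := by
          rw [← smul_add, add_comm, hCS.cos_sq_add_sin_sq, Algebra.algebraMap_eq_smul_one]
      _ ≤ (ε ^ 2) • (S * S) + (1 : ℝ) • (C * C) :=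
          add_le_add
            (smul_le_smul_of_nonneg_right (min_le_left _ _) (mul_self_nonneg hCS.isSelfAdjoint_sin))
            (smul_le_smul_of_nonneg_right (min_le_right _ _)
              (mul_self_nonneg hCS.isSelfAdjoint_cos))
      _ ≤ (ε ^ 2) • (S * S) + C * C + ε • (C * B * C) := by
          rw [one_smul]
          exact le_add_of_nonneg_right (smul_nonneg hε.le CBC_nonneg)
  · exact isStrictlyPositive_algebraMap hm

theorem exists_cos_eq_sin_eq {y z : H} (h : S y = C z) : ∃ k, C k = y ∧ S k = z := by
  refine ⟨C y + S z, ?_, ?_⟩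
  · rw [map_add, ← sin_cos hCS, ← h, cos_cos_add_sin_sin hCS]
  · rw [map_add, sin_cos hCS, h, cos_cos_add_sin_sin hCS]

theorem exists_mem_waveRelation_add_eq (hB : 0 ≤ B) {ε : ℝ} (hε : 0 < ε)
    (F : WithLp 2 (H × H)) : ∃ p ∈ waveRelation C S B, p.1 + (-ε : ℂ) • p.2 = F := by
  obtain ⟨f, h⟩ := F
  obtain ⟨g, hg⟩ : ∃ g, (ε ^ 2) • S (S g) + C (C g) + ε • C (B (C g)) = C h - ε • S f := by
    obtain ⟨U, hU⟩ := isUnit_sin_sq_add_cos_sq hCS hB hε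
    have h_inv := congr($U.mul_inv (C h - ε • S f))
    rw [hU] at h_inv
    exact ⟨_, h_inv⟩
  have compatible : S (f + ε • S g) = C (ε⁻¹ • (h - C g - ε • B (C g))) := by
    simp only [map_add, map_sub, ContinuousLinearMap.map_smul_of_tower]
    rw [eq_inv_smul_iff₀ hε.ne', smul_add, smul_smul, ← sq]
    linear_combination (norm := module) hg
  obtain ⟨k, hCk, hSk⟩ := exists_cos_eq_sin_eq hCS compatible
  refine ⟨_, mem_waveRelation.2 ⟨k, g, rfl⟩, ?_⟩
  have first : C k + (-ε : ℂ) • S g = f := by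
    rw [hCk, neg_smul, Complex.coe_smul, add_neg_cancel_right]
  have second : C g + (-ε : ℂ) • (-S k - B (C g)) = h := by
    rw [hSk, neg_smul, Complex.coe_smul, smul_sub, smul_neg, smul_inv_smul₀ hε.ne']
    abel
  exact congrArg (WithLp.toLp 2) (Prod.ext first second)

theorem isContractionGenerator_waveRelation (hB : 0 ≤ B) :
    IsContractionGenerator (waveRelation C S B) :=
  isContractionGenerator_of_dissipative (fun _ => dissipative_waveRelation hCS hB)
    (fun _ => exists_mem_waveRelation_add_eq hCS hB) (dense_domain_waveRelation hCS)

end IsCosSinPair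

end WaveGenerator

section WaveSolutions

open Set

theorem exists_primitive_Ici {E : Type*} [NormedAddCommGroup E] [NormedSpace ℝ E]
    [CompleteSpace E] {g : ℝ → E} (hg : ContinuousOn g (Ici 0)) (x : E) :
    ∃ F : ℝ → E, F 0 = x ∧ ∀ t, 0 ≤ t → HasDerivWithinAt F (g t) (Ici 0) t := by
  have extend_cont : Continuous fun s => g (max 0 s) :=
    hg.comp_continuous (by fun_prop) fun s => le_max_left 0 s
  refine ⟨fun t => x + ∫ s in (0 : ℝ)..t, g (max 0 s), by simp, fun t ht => ?_⟩
  have h := (extend_cont.integral_hasStrictDerivAt 0 t).hasDerivAt.const_add x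
  rw [max_eq_right ht] at h
  exact h.hasDerivWithinAt

theorem eqOn_Ici_of_hasDerivWithinAt_eq {E : Type*} [NormedAddCommGroup E] [NormedSpace ℝ E]
    {f g f' : ℝ → E} (hf : ∀ t, 0 ≤ t → HasDerivWithinAt f (f' t) (Ici 0) t)
    (hg : ∀ t, 0 ≤ t → HasDerivWithinAt g (f' t) (Ici 0) t) (h₀ : f 0 = g 0) :
    EqOn f g (Ici 0) := fun t ht =>
  eq_of_has_deriv_right_eq (fun s hs => (hf s hs.1).mono (Ici_subset_Ici.2 hs.1))
    (fun s hs => (hg s hs.1).mono (Ici_subset_Ici.2 hs.1))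
    (fun s hs => (hf s hs.1).continuousWithinAt.mono Icc_subset_Ici_self)
    (fun s hs => (hg s hs.1).continuousWithinAt.mono Icc_subset_Ici_self) h₀ t
    (right_mem_Icc.2 ht)

variable {H : Type*} [NormedAddCommGroup H] [InnerProductSpace ℂ H] [CompleteSpace H]

theorem exists_isCosSinPair {R : H →L[ℂ] H} (hR₀ : 0 ≤ R) (hR₁ : R ≤ 1) (hR : DenseRange R) :
    ∃ C S : H →L[ℂ] H, IsCosSinPair C S ∧ C * C = R := by
  have hS := CFC.sqrt_mul_sqrt_self (1 - R) (sub_nonneg.2 hR₁)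
  have hC := CFC.sqrt_mul_sqrt_self R hR₀
  refine ⟨CFC.sqrt R, CFC.sqrt (1 - R), ⟨?_, ?_, ?_, ?_, ?_⟩, hC⟩
  · exact (CFC.sqrt_nonneg R).isSelfAdjoint
  · exact (CFC.sqrt_nonneg _).isSelfAdjoint
  · exact (((Commute.one_left R).sub_left (Commute.refl R)).symm.cfcₙ_nnreal _).symm.cfcₙ_nnreal _
      |>.symm
  · rw [hC, hS, add_sub_cancel]
  · refine hR.mono ?_
    rintro _ ⟨x, rfl⟩
    exact ⟨CFC.sqrt R x, congr($hC x)⟩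

namespace IsCosSinPair

variable {A : H →ₗ.[ℂ] H} {C S B : H →L[ℂ] H} (hCS : IsCosSinPair C S)
include hCS

theorem exists_firstOrder_waveSolution (hB : 0 ≤ B) (f g : H) :
    ∃ y y' w w' : ℝ → H, y 0 = S (C f) ∧ w 0 = C g ∧ ContinuousOn w' (Ici 0) ∧
      ∀ t, 0 ≤ t → HasDerivWithinAt y (y' t) (Ici 0) t ∧ HasDerivWithinAt w (w' t) (Ici 0) t ∧
        C (y' t) = S (w t) ∧ ∃ k, C k = y t ∧ S k = -w' t - B (w t) := by
  obtain ⟨X, X', X_zero, X_deriv, X'_cont, X_mem⟩ :=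
    (isContractionGenerator_waveRelation hCS hB).exists_solution
      (mem_waveRelation.2 ⟨S f, g, rfl⟩)
  have fst_deriv {t : ℝ} (ht : 0 ≤ t) :=
    ((WithLp.fstL 2 ℂ H H).restrictScalars ℝ).hasFDerivAt.comp_hasDerivWithinAt t (X_deriv t ht)
  have snd_deriv {t : ℝ} (ht : 0 ≤ t) :=
    ((WithLp.sndL 2 ℂ H H).restrictScalars ℝ).hasFDerivAt.comp_hasDerivWithinAt t (X_deriv t ht)
  refine ⟨fun t => (X t).fst, fun t => (X' t).fst, fun t => (X t).snd, fun t => (X' t).snd,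
    ?_, ?_, (WithLp.sndL 2 ℂ H H).continuous.comp_continuousOn X'_cont,
    fun t ht => ⟨fst_deriv ht, snd_deriv ht, ?_⟩⟩
  · exact congr(($X_zero).fst).trans (sin_cos hCS f).symm
  · exact congr(($X_zero).snd)
  · obtain ⟨k, g, h⟩ := mem_waveRelation.1 (X_mem t ht)
    obtain ⟨hX, hX'⟩ := Prod.mk.inj h
    simp only [← hX, ← hX']
    refine ⟨(sin_cos hCS g).symm, k, rfl, ?_⟩
    change S k = -(-S k - B (C g)) - B (C g)
    rw [neg_sub, sub_neg_eq_add, add_sub_cancel_left]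

theorem exists_dampedWaveSolution (hA : ∀ p : H × H, p ∈ A.graph ↔ C (C (p.1 + p.2)) = p.1)
    (hB : 0 ≤ B) (f g : H) :
    ∃ sol : DampedWaveSolution A B, sol.u 0 = C (C f) ∧ sol.du 0 = C g := by
  obtain ⟨y, y', w, w', y_zero, w_zero, w'_cont, system⟩ :=
    exists_firstOrder_waveSolution hCS hB f g
  have w_cont : ContinuousOn w (Ici 0) := fun t ht => (system t ht).2.1.continuousWithinAt
  obtain ⟨u, u_zero, u_deriv⟩ := exists_primitive_Ici w_cont (C (C f))
  have Cy_deriv (t : ℝ) (ht : 0 ≤ t) :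
      HasDerivWithinAt (fun s => C (y s)) (S (w t)) (Ici 0) t := by
    rw [← (system t ht).2.2.1]
    exact (C.restrictScalars ℝ).hasFDerivAt.comp_hasDerivWithinAt t (system t ht).1
  have Su_deriv (t : ℝ) (ht : 0 ≤ t) :
      HasDerivWithinAt (fun s => S (u s)) (S (w t)) (Ici 0) t :=
    (S.restrictScalars ℝ).hasFDerivAt.comp_hasDerivWithinAt t (u_deriv t ht)
  have Su_eq (t : ℝ) (ht : 0 ≤ t) : S (u t) = C (y t) := by
    refine eqOn_Ici_of_hasDerivWithinAt_eq Su_deriv Cy_deriv ?_ ht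
    rw [u_zero, y_zero, sin_cos hCS]
  have u_mem (t : ℝ) (ht : 0 ≤ t) : (u t, -w' t - B (w t)) ∈ A.graph := by
    obtain ⟨k, hCk, hSk⟩ := (system t ht).2.2.2
    rw [hA, ← hSk, map_add, map_add, ← sin_cos hCS, ← sin_cos hCS, hCk, ← Su_eq t ht,
      cos_cos_add_sin_sin hCS]
  have u_dom (t : ℝ) (ht : 0 ≤ t) : u t ∈ A.domain :=
    LinearPMap.mem_domain_of_mem_graph (u_mem t ht)
  let sol : DampedWaveSolution A B :=
    { u := u
      du := w
      ddu := w'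
      Au := fun t => -w' t - B (w t)
      mem := u_dom
      hAu := fun t ht => ((LinearPMap.image_iff (u_dom t ht)).2 (u_mem t ht)).symm
      hdu := u_deriv
      hddu := fun t ht => (system t ht).2.1
      cont_ddu := w'_cont
      cont_Au := w'_cont.neg.sub (B.continuous.comp_continuousOn w_cont)
      eqn := fun t _ => by abel }
  exact ⟨sol, u_zero, w_zero⟩

end IsCosSinPair

theorem exists_dampedWaveSolution {A : H →ₗ.[ℂ] H} (hA : IsSelfAdjoint A)
    (hA_nonneg : ∀ u : A.domain, 0 ≤ (⟪A u, (u : H)⟫).re) {B : H →L[ℂ] H} (hB : 0 ≤ B)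
    (u₀ u₁ : A.domain) :
    ∃ sol : DampedWaveSolution A B, sol.u 0 = u₀ ∧ sol.du 0 = u₁ := by
  obtain ⟨R, hR₀, hR₁, mem_graph⟩ := (isNonnegSelfAdjoint_graph hA hA_nonneg).exists_resolvent
  have R_apply (u : A.domain) : R (u + A u) = u := (mem_graph (u, A u)).1 (A.mem_graph u)
  have R_dense : DenseRange R := hA.dense_domain.mono fun u hu => ⟨_, R_apply ⟨u, hu⟩⟩
  obtain ⟨C, S, hCS, hC⟩ := exists_isCosSinPair hR₀ hR₁ R_dense
  have C_C (x : H) : C (C x) = R x := congr($hC x)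
  obtain ⟨sol, h₀, h₁⟩ := hCS.exists_dampedWaveSolution (A := A)
    (fun p => by rw [mem_graph, C_C]) hB (u₀ + A u₀) (C (u₁ + A u₁))
  exact ⟨sol, by rw [h₀, C_C, R_apply], by rw [h₁, C_C, R_apply]⟩

end WaveSolutions

section HeatSolutions

open Set NormedSpace

theorem norm_exp_neg_smul_apply_sub_le {E : Type*} [NormedAddCommGroup E] [NormedSpace ℂ E]
    [CompleteSpace E] {L : E →L[ℂ] E} {l r t : ℝ} (hL : ‖L - algebraMap ℝ (E →L[ℂ] E) l‖ ≤ r)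
    (hr : r ≤ l) (ht : 0 ≤ t) (x : E) :
    ‖exp (t • -L) x - Real.exp (-(t * l)) • x‖ ≤ t * (r * ‖x‖) := by
  have l_nonneg : 0 ≤ l := (norm_nonneg _).trans (hL.trans hr)
  have exp_scalar : exp (t • -algebraMap ℝ (E →L[ℂ] E) l) x = Real.exp (-(t * l)) • x := by
    have h : t • -algebraMap ℝ (E →L[ℂ] E) l = algebraMap ℝ (E →L[ℂ] E) (-(t * l)) := by
      rw [Algebra.smul_def, ← map_neg, ← map_mul, mul_neg]
    rw [h, ← algebraMap_exp_comm, ← Real.exp_eq_exp_ℝ]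
    rfl
  have exp_le {P : E →L[ℂ] E} (hP : ‖P + algebraMap ℝ (E →L[ℂ] E) l‖ ≤ l) (s : ℝ)
      (hs : 0 ≤ s) : ‖exp (s • P)‖ ≤ 1 :=
    norm_exp_smul_le_one ContinuousLinearMap.norm_id_le hs hP
  rw [← exp_scalar]
  refine (norm_exp_smul_apply_sub_le (Algebra.commute_algebraMap_right l L).neg_left.neg_right
    (exp_le ?_) (exp_le ?_) x ht).trans ?_
  · rw [neg_add_eq_sub, norm_sub_rev]
    exact hL.trans hr
  · rwa [neg_add_cancel, norm_zero]
  · gcongr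
    rw [neg_apply, neg_apply, neg_sub_neg, norm_sub_rev]
    exact (L - algebraMap ℝ _ l).le_of_opNorm_le hL x

variable {H : Type*} [NormedAddCommGroup H] [InnerProductSpace ℂ H] [CompleteSpace H]

theorem exists_heatSolution_exp {A : H →ₗ.[ℂ] H} {V W R L : H →L[ℂ] H}
    (hVW : V ∘L W = .id ℂ H) (hR : ∀ p : H × H, R (p.1 + p.2) = p.1 → (V p.1, W p.2) ∈ A.graph)
    (hRL : Commute R L) {x : H} (hx : R (x + L x) = x) :
    ∃ hs : HeatSolution A V, hs.v = fun t => exp (t • -L) x := by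
  let v (t : ℝ) : H := exp (t • -L) x
  have exp_L (t : ℝ) (y : H) : exp (t • -L) (L y) = L (exp (t • -L) y) :=
    DFunLike.congr_fun ((Commute.refl L).neg_left.smul_left t).exp_left.eq y
  have exp_R (t : ℝ) (y : H) : exp (t • -L) (R y) = R (exp (t • -L) y) :=
    DFunLike.congr_fun (hRL.symm.neg_left.smul_left t).exp_left.eq y
  have v_deriv (t : ℝ) : HasDerivAt v (-L (v t)) t := by
    refine (hasDerivAt_exp_smul_apply (-L) x t).congr_deriv ?_
    rw [neg_apply, map_neg, exp_L]
  have v_cont : Continuous v := continuous_iff_continuousAt.2 fun t => (v_deriv t).continuousAt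
  have v_mem (t : ℝ) : (V (v t), W (L (v t))) ∈ A.graph :=
    hR (v t, L (v t)) (by rw [← exp_L, ← map_add, ← exp_R, hx])
  have v_dom (t : ℝ) : V (v t) ∈ A.domain := LinearPMap.mem_domain_of_mem_graph (v_mem t)
  refine ⟨
    { v := v
      dv := fun t => -L (v t)
      mem := fun t _ => v_dom t
      hdv := fun t _ => (v_deriv t).hasDerivWithinAt
      cont_dv := (L.continuous.comp v_cont).neg.continuousOn
      eqn := fun t _ => ?_ }, rfl⟩
  rw [← (LinearPMap.image_iff (v_dom t)).2 (v_mem t)]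
  exact neg_add_eq_zero.2 congr($hVW (L (v t))).symm

end HeatSolutions

section SecondDifference

open Set

/-- The second difference of step `τ`. It lets one use the second derivative of a function through
the values of that function alone. -/
def secondDifference {G : Type*} [AddCommGroup G] (τ : ℝ) (f : ℝ → G) (t : ℝ) : G :=
  f (t + 2 * τ) - 2 • f (t + τ) + f t

theorem map_secondDifference {F G G' : Type*} [AddCommGroup G] [AddCommGroup G'] [FunLike F G G']
    [AddMonoidHomClass F G G'] (T : F) (τ : ℝ) (f : ℝ → G) (t : ℝ) :
    T (secondDifference τ f t) = secondDifference τ (fun s => T (f s)) t := by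
  simp only [secondDifference, map_add, map_sub, map_nsmul]

theorem secondDifference_sub {G : Type*} [AddCommGroup G] (τ : ℝ) (f g : ℝ → G) (t : ℝ) :
    secondDifference τ (fun s => f s - g s) t =
      secondDifference τ f t - secondDifference τ g t := by
  simp only [secondDifference, smul_sub]
  abel

theorem norm_secondDifference_le_of_norm_le {E : Type*} [SeminormedAddCommGroup E] {f : ℝ → E}
    {t τ m : ℝ} (hτ : 0 ≤ τ) (hf : ∀ s ∈ Icc t (t + 2 * τ), ‖f s‖ ≤ m) :
    ‖secondDifference τ f t‖ ≤ 4 * m := by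
  have double_le : ‖2 • f (t + τ)‖ ≤ 2 * m := by
    refine norm_nsmul_le.trans ?_
    push_cast
    gcongr
    exact hf _ ⟨by linarith, by linarith⟩
  calc ‖secondDifference τ f t‖ ≤ m + 2 * m + m :=
        norm_add_le_of_le
          (norm_sub_le_of_le (hf _ ⟨by linarith, le_rfl⟩) double_le)
          (hf _ ⟨le_rfl, by linarith⟩)
    _ = 4 * m := by ring

/-- Apply the mean value inequality to `s ↦ a (s + τ) - a s`. -/
theorem norm_secondDifference_le {E : Type*} [NormedAddCommGroup E] [NormedSpace ℝ E]
    {a a' b c' : ℝ → E} {t τ C D : ℝ} (hτ : 0 ≤ τ)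
    (ha : ∀ s ∈ Icc t (t + 2 * τ), HasDerivAt a (a' s) s)
    (hab : ∀ s ∈ Icc t (t + 2 * τ), HasDerivAt (fun r => a' r + b r) (c' s) s)
    (hc : ∀ s ∈ Icc t (t + 2 * τ), ‖c' s‖ ≤ C) (hb : ∀ s ∈ Icc t (t + 2 * τ), ‖b s‖ ≤ D) :
    ‖secondDifference τ a t‖ ≤ τ * (τ * C + 2 * D) := by
  have mem {s : ℝ} (hs : s ∈ Icc t (t + τ)) : s ∈ Icc t (t + 2 * τ) :=
    ⟨hs.1, by linarith [hs.2]⟩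
  have mem_add {s : ℝ} (hs : s ∈ Icc t (t + τ)) : s + τ ∈ Icc t (t + 2 * τ) :=
    ⟨by linarith [hs.1], by linarith [hs.2]⟩
  have step_deriv (s : ℝ) (hs : s ∈ Icc t (t + τ)) :
      HasDerivWithinAt (fun r => a (r + τ) - a r) (a' (s + τ) - a' s) (Icc t (t + τ)) s :=
    (((ha _ (mem_add hs)).comp_add_const s τ).sub (ha s (mem hs))).hasDerivWithinAt
  have step_deriv_le (s : ℝ) (hs : s ∈ Icc t (t + τ)) :
      ‖a' (s + τ) - a' s‖ ≤ τ * C + 2 * D := by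
    have hsum := (convex_Icc t (t + 2 * τ)).norm_image_sub_le_of_norm_hasDerivWithin_le
      (fun r hr => (hab r hr).hasDerivWithinAt) hc (mem hs) (mem_add hs)
    rw [add_sub_cancel_left, Real.norm_of_nonneg hτ, mul_comm] at hsum
    calc ‖a' (s + τ) - a' s‖
        = ‖(a' (s + τ) + b (s + τ) - (a' s + b s)) - (b (s + τ) - b s)‖ := by
          congr 1
          abel
      _ ≤ τ * C + (D + D) :=
          (norm_sub_le _ _).trans (add_le_add hsum ((norm_sub_le _ _).trans
            (add_le_add (hb _ (mem_add hs)) (hb _ (mem hs)))))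
      _ = τ * C + 2 * D := by ring
  have h := (convex_Icc t (t + τ)).norm_image_sub_le_of_norm_hasDerivWithin_le step_deriv
    step_deriv_le (left_mem_Icc.2 (by linarith)) (right_mem_Icc.2 (by linarith))
  rw [add_sub_cancel_left, Real.norm_of_nonneg hτ, mul_comm] at h
  refine (congrArg norm ?_).trans_le h
  rw [secondDifference, two_mul, ← add_assoc, two_smul]
  abel

variable {H : Type*} [NormedAddCommGroup H] [InnerProductSpace ℂ H] [CompleteSpace H]
  {A : H →ₗ.[ℂ] H} {B V : H →L[ℂ] H} (hA : A.IsFormalAdjoint A) (hB : B.IsSymmetric)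
  (hBV : B ∘L V ∘L V = .id ℂ H) (sol : DampedWaveSolution A B) (hs : HeatSolution A V)
  (χ : A.domain)

include hA hB hBV in
theorem inner_ddu_add_inner_eq {t : ℝ} (ht : 0 ≤ t) :
    ⟪(χ : H), sol.ddu t⟫ + ⟪B χ, sol.du t - V (hs.dv t)⟫ = -⟪A χ, sol.u t - V (hs.v t)⟫ := by
  have B_symm (x y : H) : ⟪B x, y⟫ = ⟪x, B y⟫ := hB x y
  have heat : B (V (hs.dv t)) = -A ⟨V (hs.v t), hs.mem t ht⟩ := by
    rw [eq_neg_of_add_eq_zero_left (hs.eqn t ht), map_neg, map_neg]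
    exact congr(-$hBV (A ⟨V (hs.v t), hs.mem t ht⟩))
  have wave : sol.ddu t = -(A ⟨sol.u t, sol.mem t ht⟩ + B (sol.du t)) := by
    rw [sol.hAu t ht, eq_neg_iff_add_eq_zero, ← add_assoc]
    exact sol.eqn t ht
  have A_u := hA χ ⟨sol.u t, sol.mem t ht⟩
  have A_v := hA χ ⟨V (hs.v t), hs.mem t ht⟩
  simp only at A_u A_v
  rw [B_symm, map_sub, heat, wave, inner_sub_right (A χ), A_u, A_v, inner_sub_right,
    inner_neg_right, inner_neg_right, inner_add_right]
  ring

include hA hB hBV in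
theorem norm_inner_secondDifference_wave_le {t τ m : ℝ} (ht : 0 < t) (hτ : 0 ≤ τ)
    (hm : ∀ s ∈ Icc t (t + 2 * τ), ‖sol.u s - V (hs.v s)‖ ≤ m) :
    ‖⟪(χ : H), secondDifference τ sol.u t⟫‖ ≤
      τ * (τ * (‖A χ‖ * m) + 2 * (‖B χ‖ * m)) := by
  let d s := sol.u s - V (hs.v s)
  have pos {s : ℝ} (hs : s ∈ Icc t (t + 2 * τ)) : 0 < s := ht.trans_le hs.1
  have inner_deriv (z : H) {f : ℝ → H} {f' : H} {s : ℝ} (hs : s ∈ Icc t (t + 2 * τ))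
      (hf : HasDerivWithinAt f f' (Ici 0) s) : HasDerivAt (fun r => ⟪z, f r⟫) ⟪z, f'⟫ s :=
    ((innerSL ℂ z).restrictScalars ℝ).hasFDerivAt.comp_hasDerivAt s
      (hf.hasDerivAt (Ici_mem_nhds (pos hs)))
  have inner_d_le (z : H) (s : ℝ) (hs : s ∈ Icc t (t + 2 * τ)) : ‖⟪z, d s⟫‖ ≤ ‖z‖ * m :=
    (norm_inner_le_norm z (d s)).trans (by gcongr; exact hm s hs)
  rw [← innerSL_apply_apply ℂ, map_secondDifference]
  refine norm_secondDifference_le (a := fun s => ⟪(χ : H), sol.u s⟫)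
    (a' := fun s => ⟪(χ : H), sol.du s⟫) (b := fun s => ⟪B χ, d s⟫) (c' := fun s => -⟪A χ, d s⟫) hτ
    (fun s hs => inner_deriv χ hs (sol.hdu s (pos hs).le)) (fun s hs' => ?_)
    (fun s hs => by rw [norm_neg]; exact inner_d_le _ s hs) (inner_d_le _)
  have d_deriv : HasDerivWithinAt d (sol.du s - V (hs.dv s)) (Ici 0) s :=
    (sol.hdu s (pos hs').le).sub
      ((V.restrictScalars ℝ).hasFDerivAt.comp_hasDerivWithinAt s (hs.hdv s (pos hs').le))
  rw [← inner_ddu_add_inner_eq hA hB hBV sol hs χ (pos hs').le]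
  exact (inner_deriv _ hs' (sol.hddu s (pos hs').le)).add (inner_deriv _ hs' d_deriv)

include hA hB hBV in
theorem norm_inner_secondDifference_heat_le {t τ m : ℝ} (ht : 0 < t) (hτ : 0 ≤ τ)
    (hm : ∀ s ∈ Icc t (t + 2 * τ), ‖sol.u s - V (hs.v s)‖ ≤ m) :
    ‖⟪(χ : H), V (secondDifference τ hs.v t)⟫‖ ≤
      (τ ^ 2 * ‖A χ‖ + 2 * τ * ‖B χ‖ + 4 * ‖(χ : H)‖) * m := by
  let δ : H := secondDifference τ (fun s => sol.u s - V (hs.v s)) t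
  have split : V (secondDifference τ hs.v t) = secondDifference τ sol.u t - δ := by
    simp only [δ]
    rw [map_secondDifference, secondDifference_sub, sub_sub_cancel]
  rw [split, inner_sub_right]
  calc ‖⟪(χ : H), secondDifference τ sol.u t⟫ - ⟪(χ : H), δ⟫‖
      ≤ τ * (τ * (‖A χ‖ * m) + 2 * (‖B χ‖ * m)) + ‖(χ : H)‖ * (4 * m) := by
        refine norm_sub_le_of_le
          (norm_inner_secondDifference_wave_le hA hB hBV sol hs χ ht hτ hm)
          ((norm_inner_le_norm _ _).trans ?_)
        gcongr
        exact norm_secondDifference_le_of_norm_le hτ hm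
    _ = (τ ^ 2 * ‖A χ‖ + 2 * τ * ‖B χ‖ + 4 * ‖(χ : H)‖) * m := by ring

end SecondDifference

section ExponentialDecay

theorem secondDifference_exp_neg_mul (l τ t : ℝ) :
    secondDifference τ (fun s => Real.exp (-(s * l))) t =
      Real.exp (-(t * l)) * (1 - Real.exp (-(τ * l))) ^ 2 := by
  have exp_step : Real.exp (-((t + τ) * l)) = Real.exp (-(t * l)) * Real.exp (-(τ * l)) := by
    rw [← Real.exp_add]
    ring_nf
  have exp_two_step :
      Real.exp (-((t + 2 * τ) * l)) = Real.exp (-(t * l)) * Real.exp (-(τ * l)) ^ 2 := by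
    rw [← Real.exp_nat_mul, ← Real.exp_add]
    push_cast
    ring_nf
  rw [secondDifference, exp_step, exp_two_step, nsmul_eq_mul]
  push_cast
  ring

/-- The second difference of `s ↦ exp (-l s)` at time `1 / l` with step `1 / (2 l)`, which does not
depend on `l`. -/
noncomputable def expSecondDifference : ℝ :=
  Real.exp (-1) * (1 - Real.exp (-(1 / 2))) ^ 2

theorem expSecondDifference_pos : 0 < expSecondDifference := by
  have exp_lt : Real.exp (-(1 / 2)) < 1 := Real.exp_lt_one_iff.2 (by norm_num)
  exact mul_pos (Real.exp_pos _) (pow_pos (sub_pos.2 exp_lt) 2)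

theorem expSecondDifference_le_one : expSecondDifference ≤ 1 := by
  have exp_lt : Real.exp (-(1 / 2)) < 1 := Real.exp_lt_one_iff.2 (by norm_num)
  exact mul_le_one₀ (Real.exp_le_one_iff.2 (by norm_num)) (by positivity)
    (pow_le_one₀ (sub_pos.2 exp_lt).le (by linarith [Real.exp_pos (-(1 / 2))]))

theorem norm_secondDifference_sub_smul_le {E : Type*} [NormedAddCommGroup E] [NormedSpace ℝ E]
    {f : ℝ → E} {x : E} {l r : ℝ} (hl : 0 < l) (hr : 0 ≤ r)
    (hf : ∀ t, 0 ≤ t → ‖f t - Real.exp (-(t * l)) • x‖ ≤ t * (l * r)) :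
    ‖secondDifference (1 / (2 * l)) f (1 / l) - expSecondDifference • x‖ ≤ 8 * r := by
  have main_term : secondDifference (1 / (2 * l)) (fun s => Real.exp (-(s * l)) • x) (1 / l) =
      expSecondDifference • x := by
    have exponent₁ : 1 / l * l = 1 := by field_simp
    have exponent₂ : 1 / (2 * l) * l = 1 / 2 := by field_simp
    change secondDifference _ (fun s => LinearMap.toSpanSingleton ℝ E x (Real.exp (-(s * l)))) _ = _
    rw [← map_secondDifference, secondDifference_exp_neg_mul, exponent₁, exponent₂]
    rfl
  rw [← main_term, ← secondDifference_sub]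
  refine (norm_secondDifference_le_of_norm_le (m := 2 * r) (by positivity) fun s hs => ?_).trans_eq
    (by ring)
  have s_le : s * l ≤ 2 := by
    rw [← le_div_iff₀ hl]
    exact hs.2.trans_eq (by field_simp; norm_num)
  calc ‖f s - Real.exp (-(s * l)) • x‖ ≤ s * (l * r) :=
        hf s (le_trans (by positivity) hs.1)
    _ = s * l * r := by ring
    _ ≤ 2 * r := by gcongr

theorem le_norm_inner_secondDifference {H : Type*} [NormedAddCommGroup H] [InnerProductSpace ℂ H]
    {V W : H →L[ℂ] H} (hVW : V ∘L W = .id ℂ H) {K : ℝ} (hV : ‖V‖ ≤ K) (hW : ‖W‖ ≤ K)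
    (hK : 0 < K) {f : ℝ → H} {χ : H} {l : ℝ} (hl : 0 < l)
    (hf : ∀ t, 0 ≤ t → ‖f t - Real.exp (-(t * l)) • W χ‖ ≤
      t * (expSecondDifference / (16 * K ^ 2) * l * ‖W χ‖)) :
    expSecondDifference / 2 * ‖χ‖ ^ 2 ≤
      ‖⟪χ, V (secondDifference (1 / (2 * l)) f (1 / l))⟫‖ := by
  have q_pos := expSecondDifference_pos
  set q := expSecondDifference
  set Δ := secondDifference (1 / (2 * l)) f (1 / l)
  have error_le : ‖Δ - q • W χ‖ ≤ 8 * (q / (16 * K ^ 2) * ‖W χ‖) :=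
    norm_secondDifference_sub_smul_le hl (by positivity) fun t ht =>
      (hf t ht).trans_eq (by ring)
  have main_term : ⟪χ, V (q • W χ)⟫ = ((q * ‖χ‖ ^ 2 : ℝ) : ℂ) := by
    have V_W : V (W χ) = χ := congr($hVW χ)
    rw [V.map_smul_of_tower, V_W, inner_smul_right_eq_smul, inner_self_eq_norm_sq_to_K]
    simp
  have inner_error_le : ‖⟪χ, V (Δ - q • W χ)⟫‖ ≤ q / 2 * ‖χ‖ ^ 2 :=
    calc ‖⟪χ, V (Δ - q • W χ)⟫‖ ≤ ‖χ‖ * (K * (8 * (q / (16 * K ^ 2) * (K * ‖χ‖)))) := by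
          refine (norm_inner_le_norm _ _).trans ?_
          gcongr
          refine V.le_of_opNorm_le_of_le hV (error_le.trans ?_)
          gcongr
          exact W.le_of_opNorm_le hW χ
      _ = q / 2 * ‖χ‖ ^ 2 := by field_simp; ring
  have split : ⟪χ, V Δ⟫ = ((q * ‖χ‖ ^ 2 : ℝ) : ℂ) + ⟪χ, V (Δ - q • W χ)⟫ := by
    rw [← main_term, ← inner_add_right, ← map_add, add_sub_cancel]
  have := norm_sub_le_norm_add ((q * ‖χ‖ ^ 2 : ℝ) : ℂ) ⟪χ, V (Δ - q • W χ)⟫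
  rw [← split, Complex.norm_of_nonneg (by positivity)] at this
  linarith

end ExponentialDecay

section SlowModes

open Filter Set Topology

variable {H : Type*} [NormedAddCommGroup H] [InnerProductSpace ℂ H]
  {A : H →ₗ.[ℂ] H} {V W : H →L[ℂ] H}

theorem one_mem_spectrum_of_tendsto_norm_zero {R : H →L[ℂ] H} (hVW : V ∘L W = .id ℂ H)
    (hWV : W ∘L V = .id ℂ H)
    (hR : ∀ p : H × H, (V p.1, W p.2) ∈ A.graph → R (p.1 + p.2) = p.1)
    {w : ℕ → A.domain} (hw : ∀ n, ‖(w n : H)‖ = 1)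
    (hAw : Tendsto (fun n => ‖A (w n)‖) atTop (𝓝 0)) : 1 ∈ spectrum ℝ R := by
  have V_W (x : H) : V (W x) = x := congr($hVW x)
  have W_V (x : H) : W (V x) = x := congr($hWV x)
  refine mem_spectrum_of_tendsto (κ := (‖V‖ + 1)⁻¹) (z := fun n => W (w n)) (by positivity)
    (fun n => ?_) ?_
  · rw [inv_le_iff_one_le_mul₀' (by positivity)]
    calc 1 = ‖V (W (w n))‖ := by rw [V_W, hw]
      _ ≤ (‖V‖ + 1) * ‖W (w n)‖ := V.le_of_opNorm_le (by linarith) _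
  · have resolvent_eq (n : ℕ) : R (W (w n) + V (A (w n))) = W (w n) :=
      hR (W (w n), V (A (w n))) (by rw [V_W, W_V]; exact A.mem_graph (w n))
    have defect_eq (n : ℕ) : (1 : ℝ) • W (w n) - R (W (w n)) = (R ∘L V) (A (w n)) := by
      rw [one_smul, sub_eq_iff_eq_add', ContinuousLinearMap.comp_apply, ← map_add, resolvent_eq]
    have lim := ((R ∘L V).continuous.tendsto 0).comp (tendsto_zero_iff_norm_tendsto_zero.2 hAw)
    rw [map_zero] at lim
    exact lim.congr fun n => (defect_eq n).symm

theorem re_inner_nonneg_of_pos (hA_pos : ∀ u : A.domain, u ≠ 0 → 0 < (⟪A u, (u : H)⟫).re)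
    (u : A.domain) : 0 ≤ (⟪A u, (u : H)⟫).re := by
  rcases eq_or_ne u 0 with rfl | hu
  · rw [LinearPMap.map_zero, inner_zero_left, Complex.zero_re]
  · exact (hA_pos u hu).le

variable [CompleteSpace H]

theorem exists_injective_conjugate_resolvent (hA : IsSelfAdjoint A)
    (hA_pos : ∀ u : A.domain, u ≠ 0 → 0 < (⟪A u, (u : H)⟫).re) (hW : W.IsSymmetric)
    (hVW : V ∘L W = .id ℂ H) (hWV : W ∘L V = .id ℂ H) :
    ∃ R : H →L[ℂ] H, 0 ≤ R ∧ R ≤ 1 ∧ (∀ x, R x = x → x = 0) ∧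
      ∀ p : H × H, (V p.1, W p.2) ∈ A.graph ↔ R (p.1 + p.2) = p.1 := by
  have graph_nonneg := isNonnegSelfAdjoint_graph hA (re_inner_nonneg_of_pos hA_pos)
  obtain ⟨R, hR₀, hR₁, mem_graph_iff⟩ := (graph_nonneg.comap_prodMap hW hVW hWV).exists_resolvent
  refine ⟨R, hR₀, hR₁, fun x hx => ?_, mem_graph_iff⟩
  have kernel : (V x, W 0) ∈ A.graph := (mem_graph_iff (x, 0)).2 (by rwa [add_zero])
  rw [map_zero] at kernel
  obtain ⟨u, hu, hAu⟩ : ∃ u : A.domain, (u : H) = V x ∧ A u = 0 := A.mem_graph_iff.1 kernel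
  have u_zero : u = 0 := by
    by_contra u_ne
    simpa only [hAu, inner_zero_left, Complex.zero_re, lt_self_iff_false] using hA_pos u u_ne
  have V_x : V x = 0 := by rw [← hu, u_zero, ZeroMemClass.coe_zero]
  calc x = W (V x) := congr($hWV x).symm
    _ = 0 := by rw [V_x, map_zero]

theorem exists_slow_heatSolution (hA : IsSelfAdjoint A)
    (hA_pos : ∀ u : A.domain, u ≠ 0 → 0 < (⟪A u, (u : H)⟫).re) (hW : W.IsSymmetric)
    (hVW : V ∘L W = .id ℂ H) (hWV : W ∘L V = .id ℂ H) {w : ℕ → A.domain}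
    (hw : ∀ n, ‖(w n : H)‖ = 1) (hAw : Tendsto (fun n => ‖A (w n)‖) atTop (𝓝 0))
    {l₀ δ ρ : ℝ} (hl₀ : 0 < l₀) (hδ₀ : 0 < δ) (hδ₁ : δ ≤ 1) (hρ : 0 < ρ) :
    ∃ l > 0, l < l₀ ∧ ∃ (χ : A.domain) (hs : HeatSolution A V), ‖(χ : H)‖ = ρ ∧ hs.v 0 = W χ ∧
      ‖A χ‖ ≤ ‖W‖ * (2 * l * ‖W χ‖) ∧
      ∀ t, 0 ≤ t → ‖hs.v t - Real.exp (-(t * l)) • W χ‖ ≤ t * (δ * l * ‖W χ‖) := by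
  have W_V (x : H) : W (V x) = x := congr($hWV x)
  obtain ⟨R, hR₀, hR₁, R_inj, mem_graph_iff⟩ :=
    exists_injective_conjugate_resolvent hA hA_pos hW hVW hWV
  obtain ⟨l, hl, hl_lt, L, hRL, hL, x, hx, hRx⟩ := exists_small_spectral_piece hR₀ hR₁
    (one_mem_spectrum_of_tendsto_norm_zero hVW hWV (fun p => (mem_graph_iff p).1) hw hAw)
    R_inj hl₀ hδ₀
  have V_x_ne : V x ≠ 0 := fun h => hx (by rw [← W_V x, h, map_zero])
  let y : H := (ρ / ‖V x‖) • x
  have hRy : R (y + L y) = y := by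
    simp only [y]
    rw [L.map_smul_of_tower, ← smul_add, R.map_smul_of_tower, hRx]
  have mem_graph : (V y, W (L y)) ∈ A.graph := (mem_graph_iff (y, L y)).2 hRy
  let χ : A.domain := ⟨V y, LinearPMap.mem_domain_of_mem_graph mem_graph⟩
  have W_χ : W χ = y := W_V y
  have A_χ : A χ = W (L y) := ((LinearPMap.image_iff χ.2).2 mem_graph).symm
  have norm_χ : ‖(χ : H)‖ = ρ := by
    simp only [χ, y]
    rw [V.map_smul_of_tower, norm_smul, Real.norm_of_nonneg (by positivity),
      div_mul_cancel₀ _ (norm_ne_zero_iff.2 V_x_ne)]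
  have L_le : ‖L‖ ≤ 2 * l :=
    calc ‖L‖ ≤ ‖L - algebraMap ℝ (H →L[ℂ] H) l‖ + ‖algebraMap ℝ (H →L[ℂ] H) l‖ :=
          norm_le_norm_sub_add _ _
      _ ≤ δ * l + l * 1 := by
          rw [norm_algebraMap, Real.norm_of_nonneg hl.le]
          gcongr
          exact ContinuousLinearMap.norm_id_le
      _ ≤ 2 * l := by nlinarith
  obtain ⟨hs, v_eq⟩ := exists_heatSolution_exp hVW (fun p => (mem_graph_iff p).2) hRL hRy
  refine ⟨l, hl, hl_lt, χ, hs, norm_χ, ?_, ?_, fun t ht => ?_⟩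
  · rw [W_χ, v_eq]
    simp
  · rw [A_χ, W_χ]
    exact W.le_opNorm_of_le (L.le_of_opNorm_le L_le y)
  · rw [v_eq, W_χ]
    exact norm_exp_neg_smul_apply_sub_le hL (mul_le_of_le_one_left hl.le hδ₁) ht y

end SlowModes

section LowerBound

open Set

variable {H : Type*} [NormedAddCommGroup H] [InnerProductSpace ℂ H]

theorem sq_norm_add_re_inner_le_one {χ ψ : H} {K l : ℝ} (hK : 1 ≤ K) (hl : l ≤ 1)
    (hχ : ‖χ‖ = 1 / (2 * K)) (hψ : ‖ψ‖ ≤ 2 * l * K ^ 2 * ‖χ‖) :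
    ‖χ‖ ^ 2 + (⟪ψ, χ⟫).re ≤ 1 := by
  have χ_le : ‖χ‖ ^ 2 ≤ 1 / 4 := by
    rw [hχ, div_pow, one_pow]
    gcongr
    nlinarith
  have inner_le : (⟪ψ, χ⟫).re ≤ 1 / 2 :=
    calc (⟪ψ, χ⟫).re ≤ 2 * l * K ^ 2 * ‖χ‖ * ‖χ‖ :=
          (re_inner_le_norm (𝕜 := ℂ) ψ χ).trans (by gcongr)
      _ = l / 2 := by rw [hχ]; field_simp
      _ ≤ 1 / 2 := by gcongr
  linarith

variable [CompleteSpace H]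

/-- Were the gap smaller on `[1 / l, 2 / l]`, the second difference of the heat solution there would
be too small. -/
theorem exists_le_mul_norm_sub {A : H →ₗ.[ℂ] H} {B V W : H →L[ℂ] H} (hA : A.IsFormalAdjoint A)
    (hB : B.IsSymmetric) (hBV : B ∘L V ∘L V = .id ℂ H) (hVW : V ∘L W = .id ℂ H) {K l : ℝ}
    (hK : 1 ≤ K) (hB_le : ‖B‖ ≤ K ^ 2) (hV_le : ‖V‖ ≤ K) (hW_le : ‖W‖ ≤ K) (hl₀ : 0 < l)
    (hl₁ : l ≤ 1) (sol : DampedWaveSolution A B) (hs : HeatSolution A V) {χ : A.domain}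
    (hχ : χ ≠ 0) (hAχ : ‖A χ‖ ≤ 2 * l * K ^ 2 * ‖(χ : H)‖)
    (hv : ∀ t, 0 ≤ t → ‖hs.v t - Real.exp (-(t * l)) • W χ‖ ≤
      t * (expSecondDifference / (16 * K ^ 2) * l * ‖W χ‖)) :
    ∃ t ≥ 1 / l, expSecondDifference / (12 * K ^ 2) * ‖(χ : H)‖ ≤
      t * ‖sol.u t - V (hs.v t)‖ := by
  have q_pos := expSecondDifference_pos
  set q := expSecondDifference
  have K_pos : 0 < K := by linarith
  have χ_pos : 0 < ‖(χ : H)‖ := norm_pos_iff.2 (by simpa using hχ)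
  by_contra! small
  have gap_le (s : ℝ) (hs' : s ∈ Icc (1 / l) (1 / l + 2 * (1 / (2 * l)))) :
      ‖sol.u s - V (hs.v s)‖ ≤ q / (12 * K ^ 2) * ‖(χ : H)‖ * l := by
    rw [← div_le_iff₀ hl₀, ← one_div_mul_eq_div]
    exact (mul_le_mul_of_nonneg_right hs'.1 (norm_nonneg _)).trans (small s hs'.1).le
  have coefficient_le : (1 / (2 * l)) ^ 2 * ‖A χ‖ + 2 * (1 / (2 * l)) * ‖B χ‖ + 4 * ‖(χ : H)‖ ≤
      11 / 2 * (K ^ 2 / l * ‖(χ : H)‖) := by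
    have one_le : 1 ≤ K ^ 2 / l := by
      rw [one_le_div hl₀]
      exact hl₁.trans (one_le_pow₀ hK)
    calc _ ≤ (1 / (2 * l)) ^ 2 * (2 * l * K ^ 2 * ‖(χ : H)‖)
          + 2 * (1 / (2 * l)) * (K ^ 2 * ‖(χ : H)‖) + 4 * (K ^ 2 / l * ‖(χ : H)‖) := by
          gcongr
          · exact B.le_of_opNorm_le hB_le χ
          · exact le_mul_of_one_le_left χ_pos.le one_le
      _ = 11 / 2 * (K ^ 2 / l * ‖(χ : H)‖) := by field_simp; norm_num
  have lower := le_norm_inner_secondDifference hVW hV_le hW_le K_pos hl₀ hv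
  have upper := norm_inner_secondDifference_heat_le hA hB hBV sol hs χ (by positivity)
    (by positivity) gap_le
  have : q / 2 * ‖(χ : H)‖ ^ 2 ≤ 11 / 24 * (q * ‖(χ : H)‖ ^ 2) :=
    calc q / 2 * ‖(χ : H)‖ ^ 2
        ≤ 11 / 2 * (K ^ 2 / l * ‖(χ : H)‖) * (q / (12 * K ^ 2) * ‖(χ : H)‖ * l) :=
          (lower.trans upper).trans (by gcongr)
      _ = 11 / 24 * (q * ‖(χ : H)‖ ^ 2) := by field_simp; norm_num
  have : 0 < q * ‖(χ : H)‖ ^ 2 := by positivity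
  linarith

theorem exists_solutions_with_gap {A : H →ₗ.[ℂ] H} (hA : IsSelfAdjoint A)
    (hA_pos : ∀ u : A.domain, u ≠ 0 → 0 < (⟪A u, (u : H)⟫).re) {V W : H →L[ℂ] H}
    (hW : IsSelfAdjoint W) (hVW : V ∘L W = .id ℂ H) (hWV : W ∘L V = .id ℂ H)
    {w : ℕ → A.domain} (hw : ∀ n, ‖(w n : H)‖ = 1)
    (hAw : Filter.Tendsto (fun n => ‖A (w n)‖) Filter.atTop (nhds 0)) {K T : ℝ} (hK : 1 ≤ K)
    (hV_le : ‖V‖ ≤ K) (hW_le : ‖W‖ ≤ K) (hT : 0 < T) :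
    ∃ t > T, ∃ (sol : DampedWaveSolution A (W ∘L W)) (hs : HeatSolution A V),
      hs.v 0 = W (sol.u 0) ∧ sol.du 0 = 0 ∧ ‖sol.u 0‖ ^ 2 + (⟪sol.Au 0, sol.u 0⟫).re ≤ 1 ∧
      expSecondDifference / (12 * K ^ 2) * (1 / (2 * K)) ≤ t * ‖sol.u t - V (hs.v t)‖ := by
  have q_pos := expSecondDifference_pos
  have A_formal : A.IsFormalAdjoint A := by
    simpa only [LinearPMap.isSelfAdjoint_def.1 hA] using A.adjoint_isFormalAdjoint hA.dense_domain
  have B_nonneg : 0 ≤ W ∘L W := hW.mul_self_nonneg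
  have B_V_V : (W ∘L W) ∘L V ∘L V = .id ℂ H := by
    rw [ContinuousLinearMap.comp_assoc, ← ContinuousLinearMap.comp_assoc W V V, hWV,
      ContinuousLinearMap.id_comp, hWV]
  have δ_le : expSecondDifference / (16 * K ^ 2) ≤ 1 :=
    div_le_one_of_le₀ (expSecondDifference_le_one.trans (by nlinarith)) (by positivity)
  obtain ⟨l, hl, hl_lt, χ, hs, norm_χ, v_zero, A_χ, hv⟩ := exists_slow_heatSolution hA hA_pos
    hW.isSymmetric hVW hWV hw hAw (l₀ := min 1 (1 / T)) (ρ := 1 / (2 * K)) (by positivity)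
    (by positivity) δ_le (by positivity)
  obtain ⟨l_lt_one, l_lt_inv⟩ := lt_min_iff.1 hl_lt
  have A_χ_le : ‖A χ‖ ≤ 2 * l * K ^ 2 * ‖(χ : H)‖ :=
    calc ‖A χ‖ ≤ K * (2 * l * (K * ‖(χ : H)‖)) := A_χ.trans (by
          gcongr
          exact W.le_of_opNorm_le hW_le χ)
      _ = 2 * l * K ^ 2 * ‖(χ : H)‖ := by ring
  have χ_ne : χ ≠ 0 := by
    have : ‖(χ : H)‖ ≠ 0 := by rw [norm_χ]; positivity
    simpa using this
  obtain ⟨sol, u_zero, du_zero⟩ := exists_dampedWaveSolution hA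
    (re_inner_nonneg_of_pos hA_pos) B_nonneg χ 0
  have Au_zero : sol.Au 0 = A χ := by
    rw [← sol.hAu 0 le_rfl]
    congr 1
    exact Subtype.ext u_zero
  obtain ⟨t, ht, gap⟩ := exists_le_mul_norm_sub A_formal B_nonneg.isSelfAdjoint.isSymmetric
    B_V_V hVW hK ((W.opNorm_comp_le W).trans (by rw [sq]; gcongr)) hV_le hW_le hl l_lt_one.le sol hs
    χ_ne A_χ_le hv
  refine ⟨t, ?_, sol, hs, ?_, du_zero, ?_, ?_⟩
  · exact (lt_one_div hl hT |>.1 l_lt_inv).trans_le ht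
  · rw [v_zero, u_zero]
  · rw [Au_zero, u_zero]
    exact sq_norm_add_re_inner_le_one hK l_lt_one.le norm_χ A_χ_le
  · rwa [norm_χ] at gap

theorem stmt7_general (A : H →ₗ.[ℂ] H) (hA_sa : IsSelfAdjoint A)
    (hA_pos : ∀ u : A.domain, u ≠ 0 → 0 < (⟪A u, (u : H)⟫).re)
    (B Bh Binvh : H →L[ℂ] H) (hBh_sq : Bh ∘L Bh = B) (hBh_sa : IsSelfAdjoint Bh)
    (hBinv₁ : Binvh ∘L Bh = .id ℂ H) (hBinv₂ : Bh ∘L Binvh = .id ℂ H)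
    (hspec : ∃ w : ℕ → A.domain, (∀ n, ‖(w n : H)‖ = 1) ∧
      Filter.Tendsto (fun n => ‖A (w n)‖) Filter.atTop (nhds 0)) :
    ∃ c₀ > (0 : ℝ), ∀ T > (0 : ℝ), ∃ t > T,
      ∃ (sol : DampedWaveSolution A B) (hs : HeatSolution A Binvh),
        hs.v 0 = Bh (sol.u 0) + Binvh (sol.du 0) ∧
        ‖sol.u 0‖ ^ 2 + (⟪sol.Au 0, sol.u 0⟫).re + ‖sol.du 0‖ ^ 2 ≤ 1 ∧
        c₀ ≤ t * ‖sol.u t - Binvh (hs.v t)‖ := by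
  subst hBh_sq
  obtain ⟨w, hw, hAw⟩ := hspec
  let K := 1 + ‖Bh‖ + ‖Binvh‖
  have K_ge : 1 ≤ K ∧ ‖Bh‖ ≤ K ∧ ‖Binvh‖ ≤ K := by
    refine ⟨?_, ?_, ?_⟩ <;> simp only [K] <;> linarith [norm_nonneg Bh, norm_nonneg Binvh]
  obtain ⟨one_le_K, Bh_le, Binvh_le⟩ := K_ge
  have q_pos := expSecondDifference_pos
  refine ⟨expSecondDifference / (12 * K ^ 2) * (1 / (2 * K)), by positivity, fun T hT => ?_⟩
  obtain ⟨t, ht, sol, hs, hv, hdu, energy, gap⟩ := exists_solutions_with_gap hA_sa hA_pos hBh_sa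
    hBinv₁ hBinv₂ hw hAw one_le_K Binvh_le Bh_le hT
  refine ⟨t, ht, sol, hs, ?_, ?_, gap⟩
  · rw [hv, hdu, map_zero, add_zero]
  · rwa [hdu, norm_zero, zero_pow two_ne_zero, add_zero]

end LowerBound

/-- optimality of the rate `t⁻¹` when `0` is in the spectrum of `A`. -/
theorem stmt7
    {H : Type*} [NormedAddCommGroup H] [InnerProductSpace ℂ H] [CompleteSpace H]
    (A : H →ₗ.[ℂ] H) (hA_sa : IsSelfAdjoint A)
    (hA_pos : ∀ u : A.domain, u ≠ 0 → 0 < (⟪A u, (u : H)⟫).re)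
    (B : H →L[ℂ] H) (hB_sa : IsSelfAdjoint B)
    (c : ℝ) (hc : 0 < c)
    (hB_pos : ∀ u : H, c * ‖u‖ ^ 2 ≤ (⟪B u, u⟫).re)
    -- `Bh` is the positive square root `B^{1/2}` of `B`, `Binvh` its inverse `B^{-1/2}`
    (Bh Binvh : H →L[ℂ] H)
    (hBh_sq : Bh ∘L Bh = B) (hBh_sa : IsSelfAdjoint Bh)
    (hBh_pos : ∀ u : H, 0 ≤ (⟪Bh u, u⟫).re)
    (hBinv₁ : Binvh ∘L Bh = ContinuousLinearMap.id ℂ H)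
    (hBinv₂ : Bh ∘L Binvh = ContinuousLinearMap.id ℂ H)
    -- `B^{±1/2}` map `D(A)` into `D(A)` with the stated bounds
    (hBhD : ∀ u : A.domain, Bh (u : H) ∈ A.domain)
    (hBinvD : ∀ u : A.domain, Binvh (u : H) ∈ A.domain)
    (C₀ : ℝ) (hC₀ : 0 < C₀)
    (hBhA : ∀ u : A.domain, ‖A ⟨Bh (u : H), hBhD u⟩‖ ≤ C₀ * (‖(u : H)‖ + ‖A u‖))
    (hBinvA : ∀ u : A.domain, ‖A ⟨Binvh (u : H), hBinvD u⟩‖ ≤ C₀ * (‖(u : H)‖ + ‖A u‖)) :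
    ∀ _hspec : (∃ w : ℕ → A.domain, (∀ n, ‖(w n : H)‖ = 1) ∧
        Filter.Tendsto (fun n => ‖A (w n)‖) Filter.atTop (nhds 0)),
      ∃ c₀ > (0:ℝ), ∀ T > (0:ℝ), ∃ t > T,
        ∃ (sol : DampedWaveSolution A B) (hs : HeatSolution A Binvh),
          hs.v 0 = Bh (sol.u 0) + Binvh (sol.du 0) ∧
          ‖sol.u 0‖ ^ 2 + (⟪sol.Au 0, sol.u 0⟫).re + ‖sol.du 0‖ ^ 2 ≤ 1 ∧
          c₀ ≤ t * ‖sol.u t - Binvh (hs.v t)‖ := fun hspec =>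
  stmt7_general A hA_sa hA_pos B Bh Binvh hBh_sq hBh_sa hBinv₁ hBinv₂ hspec
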